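/- Fix integers m ≥ 1 and n ≥ 1. The number of labelled m-Tamari intervals of size n equals (m+1)^n (mn+1)^{n−2}, the equality being understood in ℚ (for n = 1 the right-hand side equals 1). -/

import Mathlib

/-- A step of a lattice path: north or east. -/
inductive Step : Type
  | N : Step
  | E : Step
deriving DecidableEq

/-- Number of north steps of a path. -/
def northCount (w : List Step) : ℕ := (w.filter (fun s => s = Step.N)).length

/-- Number of east steps of a path. -/
def eastCount (w : List Step) : ℕ := (w.filter (fun s => s = Step.E)).length

/-- `w` is an `m`-ballot path: it never goes below the line `x = m y`, and ends on it. -/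
def IsBallot (m : ℕ) (w : List Step) : Prop :=
  (∀ k, eastCount (w.take k) ≤ m * northCount (w.take k)) ∧
    eastCount w = m * northCount w

/-- The covering relation of the `m`-Tamari order: `Q` covers `P` when `P` contains an
east step immediately followed by a north step `b`, and `Q` is obtained from `P` by
swapping the east step and `S`, where `S` is the shortest factor of `P` beginning with
`b` that is a (translated) `m`-ballot path. -/
def TamariCovers (m : ℕ) (P Q : List Step) : Prop :=
  ∃ w₁ S w₂ : List Step,
    S ≠ [] ∧ S.head? = some Step.N ∧ IsBallot m S ∧
    (∀ k, 0 < k → k < S.length → ¬ IsBallot m (S.take k)) ∧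
    P = w₁ ++ Step.E :: (S ++ w₂) ∧ Q = w₁ ++ S ++ Step.E :: w₂

/-- The `m`-Tamari order (reflexive–transitive closure of the covering relation). -/
def TamariLE (m : ℕ) : List Step → List Step → Prop :=
  Relation.ReflTransGen (TamariCovers m)

/-- `lab` is a labelling of the `n` north steps of `Q` by `1, …, n` (here, bijectively by
`Fin n`), increasing along each ascent: `lab i` is the position in `Q` of the north step
labelled `i`. -/
def IsLabelling (n : ℕ) (Q : List Step) (lab : Fin n → ℕ) : Prop :=
  Function.Injective lab ∧ (∀ i, Q[lab i]? = some Step.N) ∧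
    (∀ i j : Fin n, lab j = lab i + 1 → i < j)

/-- A labelled `m`-Tamari interval of size `n`: a pair of `m`-ballot paths of size `n`
with `P ≤ Q` in the `m`-Tamari order, together with a labelling of `Q`. -/
def IsLabelledTamariInterval (m n : ℕ)
    (x : (List Step × List Step) × (Fin n → ℕ)) : Prop :=
  IsBallot m x.1.1 ∧ northCount x.1.1 = n ∧
    IsBallot m x.1.2 ∧ northCount x.1.2 = n ∧
    TamariLE m x.1.1 x.1.2 ∧ IsLabelling n x.1.2 x.2

/-- The cycles of a permutation, as the quotient by the `SameCycle` relation. -/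
def Cycles {n : ℕ} (σ : Equiv.Perm (Fin n)) : Type :=
  Quotient (Equiv.Perm.SameCycle.setoid σ)

/-- The number of cycles of a permutation (fixed points count as cycles). -/
noncomputable def numCycles {n : ℕ} (σ : Equiv.Perm (Fin n)) : ℕ :=
  Nat.card (Cycles σ)

/-- The length of a cycle of a permutation. -/
noncomputable def cycleLen {n : ℕ} (σ : Equiv.Perm (Fin n)) (c : Cycles σ) : ℕ :=
  Nat.card {i : Fin n // Quotient.mk (Equiv.Perm.SameCycle.setoid σ) i = c}

/-- Positions `a` and `b` belong to the same ascent (maximal run of north steps) of `Q`. -/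
def SameAscent (Q : List Step) (a b : ℕ) : Prop :=
  ∀ r, min a b ≤ r → r ≤ max a b → Q[r]? = some Step.N

/-- A labelled interval is fixed by `σ` exactly when every cycle of `σ` is contained in
the label set of a single ascent of the upper path. -/
def FixedBy {n : ℕ} (x : (List Step × List Step) × (Fin n → ℕ))
    (σ : Equiv.Perm (Fin n)) : Prop :=
  ∀ i j : Fin n, σ.SameCycle i j → SameAscent x.1.2 (x.2 i) (x.2 j)


/-! ## Part A : paths, heights and the recursive structure of Tamari intervals -/

/-- Height reached by a path starting at height `h`; `none` if it goes below `0`. -/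
def hrun (m : ℕ) : ℕ → List Step → Option ℕ
  | h, [] => some h
  | h, Step.N :: w => hrun m (h + m) w
  | 0, Step.E :: _ => none
  | h + 1, Step.E :: w => hrun m h w

theorem hrun_append (m : ℕ) (u v : List Step) : ∀ h, hrun m h (u ++ v) =
    (hrun m h u).bind (fun h' => hrun m h' v) := by
  induction u with
  | nil => intro h; simp [hrun]
  | cons s u ih =>
    intro h
    cases s
    · simp [hrun, ih]
    · cases h <;> simp [hrun, ih]

theorem hrun_append_some {m h h' : ℕ} {u v : List Step} (hu : hrun m h u = some h') :
    hrun m h (u ++ v) = hrun m h' v := by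
  rw [hrun_append, hu]; rfl

theorem hrun_left_part {m h h' : ℕ} {u v : List Step} (hu : hrun m h (u ++ v) = some h') :
    ∃ g, hrun m h u = some g ∧ hrun m g v = some h' := by
  rw [hrun_append] at hu
  cases hh : hrun m h u with
  | none => simp [hh] at hu
  | some g => exact ⟨g, rfl, by simpa [hh] using hu⟩

theorem hrun_add (m c : ℕ) (u : List Step) : ∀ h h', hrun m h u = some h' →
    hrun m (h + c) u = some (h' + c) := by
  induction u with
  | nil => intro h h' hh; simp [hrun] at *; omega
  | cons s u ih =>
    intro h h' hh
    cases s
    · simp only [hrun] at *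
      have := ih _ _ hh
      rwa [show h + m + c = h + c + m by omega] at this
    · cases h with
      | zero => simp [hrun] at hh
      | succ h =>
        rw [show h + 1 + c = (h + c) + 1 by omega]
        simp only [hrun] at *
        exact ih _ _ hh

theorem hrun_lift {m : ℕ} (c : ℕ) {u : List Step} (hu : hrun m 0 u = some 0) :
    hrun m c u = some c := by
  have := hrun_add m c u _ _ hu
  simpa using this

@[simp] theorem northCount_nil : northCount [] = 0 := rfl
@[simp] theorem eastCount_nil : eastCount [] = 0 := rfl
@[simp] theorem northCount_N (w) : northCount (Step.N :: w) = northCount w + 1 := by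
  simp [northCount]
@[simp] theorem northCount_E (w) : northCount (Step.E :: w) = northCount w := by
  simp [northCount]
@[simp] theorem eastCount_N (w) : eastCount (Step.N :: w) = eastCount w := by
  simp [eastCount]
@[simp] theorem eastCount_E (w) : eastCount (Step.E :: w) = eastCount w + 1 := by
  simp [eastCount]
@[simp] theorem northCount_append (u w) : northCount (u ++ w) = northCount u + northCount w := by
  simp [northCount]
@[simp] theorem eastCount_append (u w) : eastCount (u ++ w) = eastCount u + eastCount w := by
  simp [eastCount]

theorem length_eq_counts (w : List Step) : w.length = northCount w + eastCount w := by
  induction w with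
  | nil => rfl
  | cons s w ih => cases s <;> simp [ih] <;> omega

theorem hrun_count (m : ℕ) (u : List Step) : ∀ h h', hrun m h u = some h' →
    h + m * northCount u = h' + eastCount u := by
  induction u with
  | nil => intro h h' hh; simp [hrun] at *; omega
  | cons s u ih =>
    intro h h' hh
    cases s
    · simp only [hrun] at hh
      have := ih _ _ hh
      simp; rw [mul_add]; omega
    · cases h with
      | zero => simp [hrun] at hh
      | succ h =>
        simp only [hrun] at hh
        have := ih _ _ hh
        simp; omega

theorem hrun_exists_iff (m : ℕ) (u : List Step) : ∀ h, (∃ h', hrun m h u = some h') ↔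
    ∀ k, eastCount (u.take k) ≤ h + m * northCount (u.take k) := by
  induction u with
  | nil => intro h; simp [hrun]
  | cons s u ih =>
    intro h
    have key : ∀ (p : ℕ → Prop), (∀ k, p k) ↔ p 0 ∧ ∀ k, p (k + 1) := by
      intro p
      exact ⟨fun hh => ⟨hh 0, fun k => hh _⟩, fun hh k => by cases k; exact hh.1; exact hh.2 _⟩
    rw [key]
    cases s
    · simp only [hrun, ih]
      simp
      refine forall_congr' fun k => ?_
      rw [mul_add]; constructor <;> intro <;> omega
    · cases h with
      | zero =>
        simp [hrun]
        exact ⟨0, by simp⟩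
      | succ h =>
        simp only [hrun, ih]
        simp
        refine forall_congr' fun k => ?_
        constructor <;> intro <;> omega

theorem isBallot_iff (m : ℕ) (w : List Step) : IsBallot m w ↔ hrun m 0 w = some 0 := by
  unfold IsBallot
  have h1 := hrun_exists_iff m w 0
  simp only [zero_add] at h1
  rw [← h1]
  constructor
  · rintro ⟨⟨h', hh⟩, he⟩
    have := hrun_count m w _ _ hh
    rw [hh]; congr 1; omega
  · intro hh
    have := hrun_count m w _ _ hh
    exact ⟨⟨0, hh⟩, by omega⟩

theorem TamariCovers.context {m : ℕ} {P Q : List Step} (h : TamariCovers m P Q)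
    (a b : List Step) : TamariCovers m (a ++ P ++ b) (a ++ Q ++ b) := by
  obtain ⟨w₁, S, w₂, h1, h2, h3, h4, rfl, rfl⟩ := h
  exact ⟨a ++ w₁, S, w₂ ++ b, h1, h2, h3, h4, by simp, by simp⟩

theorem TamariLE.context {m : ℕ} {P Q : List Step} (h : TamariLE m P Q)
    (a b : List Step) : TamariLE m (a ++ P ++ b) (a ++ Q ++ b) := by
  induction h with
  | refl => exact Relation.ReflTransGen.refl
  | tail _ h2 ih => exact Relation.ReflTransGen.tail ih (h2.context a b)

theorem TamariCovers.hrun_eq {m : ℕ} {P Q : List Step} (h : TamariCovers m P Q) (k : ℕ) :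
    hrun m k P = hrun m k Q := by
  obtain ⟨w₁, S, w₂, h1, h2, h3, h4, rfl, rfl⟩ := h
  rw [isBallot_iff] at h3
  rw [List.append_assoc, hrun_append, hrun_append]
  congr 1
  funext g
  rw [hrun_append_some (hrun_lift g h3)]
  cases g with
  | zero => simp [hrun]
  | succ g => simp only [hrun]; rw [hrun_append_some (hrun_lift g h3)]

theorem TamariCovers.north_eq {m : ℕ} {P Q : List Step} (h : TamariCovers m P Q) :
    northCount P = northCount Q ∧ eastCount P = eastCount Q := by
  obtain ⟨w₁, S, w₂, h1, h2, h3, h4, rfl, rfl⟩ := h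
  constructor <;> simp <;> omega

theorem TamariLE.hrun_eq {m : ℕ} {P Q : List Step} (h : TamariLE m P Q) (k : ℕ) :
    hrun m k P = hrun m k Q := by
  induction h with
  | refl => rfl
  | tail _ h2 ih => rw [ih, h2.hrun_eq]

theorem TamariLE.north_eq {m : ℕ} {P Q : List Step} (h : TamariLE m P Q) :
    northCount P = northCount Q ∧ eastCount P = eastCount Q := by
  induction h with
  | refl => simp
  | tail _ h2 ih => rw [ih.1, ih.2]; exact h2.north_eq

theorem TamariLE.length_eq {m : ℕ} {P Q : List Step} (h : TamariLE m P Q) :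
    P.length = Q.length := by
  rw [length_eq_counts, length_eq_counts, h.north_eq.1, h.north_eq.2]

/-- A swapped factor never straddles a contact with the bottom line. -/
theorem no_straddle {m k : ℕ} {C D w₁ S w₂ : List Step}
    (h : hrun m k (C ++ D) = some 0) (hC : hrun m k C = some 0) (hS : hrun m 0 S = some 0)
    (he : C ++ D = w₁ ++ S ++ Step.E :: w₂) :
    (∃ w', C = w₁ ++ S ++ Step.E :: w' ∧ w₂ = w' ++ D) ∨
    (∃ w', D = w' ++ S ++ Step.E :: w₂ ∧ w₁ = C ++ w') := by
  have he' := he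
  rw [List.append_assoc, List.append_eq_append_iff] at he
  rcases he with ⟨a, rfl, rfl⟩ | ⟨a, rfl, he⟩
  · right; exact ⟨a, by simp, rfl⟩
  · rw [eq_comm, List.append_eq_append_iff] at he
    rcases he with ⟨b, rfl, rfl⟩ | ⟨b, rfl, he⟩
    · exfalso
      obtain ⟨g, hg1, hg2⟩ := hrun_left_part hC
      obtain ⟨g', hg3, hg4⟩ := hrun_left_part hS
      have h5 := hrun_add m g a _ _ hg3
      rw [zero_add, hg2] at h5
      have hg0 : g = 0 := by simp at h5; omega
      subst hg0
      rw [show w₁ ++ a ++ (b ++ Step.E :: w₂) = w₁ ++ ((a ++ b) ++ Step.E :: w₂) by simp,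
        hrun_append_some hg1, hrun_append_some hS] at h
      simp [hrun] at h
    · cases b with
      | nil =>
        exfalso
        simp at he
        rw [hrun_append_some hC, ← he] at h
        simp [hrun] at h
      | cons e b =>
        simp at he
        obtain ⟨rfl, rfl⟩ := he
        left; exact ⟨b, by simp, rfl⟩

/-- Moving an east step to the right of a ballot path goes up. -/
theorem le_move {m : ℕ} : ∀ (n : ℕ) (p : List Step), p.length = n → hrun m 0 p = some 0 →
    TamariLE m (Step.E :: p) (p ++ [Step.E]) := by
  intro n
  induction n using Nat.strong_induction_on with
  | _ n ih =>
  intro p hn hp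
  cases p with
  | nil => exact Relation.ReflTransGen.refl
  | cons s p =>
    cases s with
    | E => simp [hrun] at hp
    | N =>
      have hex : ∃ k, 0 < k ∧ hrun m 0 ((Step.N :: p).take k) = some 0 :=
        ⟨(Step.N :: p).length, by simp, by rw [List.take_length]; exact hp⟩
      classical
      obtain ⟨hk0, hk⟩ := Nat.find_spec hex
      have hmin := fun k' => @Nat.find_min _ _ hex k'
      generalize Nat.find hex = k at *
      have hdrop : hrun m 0 ((Step.N :: p).drop k) = some 0 := by
        rw [← hrun_append_some (v := (Step.N :: p).drop k) hk, List.take_append_drop]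
        exact hp
      have hlen : ((Step.N :: p).drop k).length < n := by
        rw [List.length_drop, hn]
        have : 0 < n := by rw [← hn]; simp
        omega
      have h2 := ih _ hlen _ rfl hdrop
      have h3 := h2.context ((Step.N :: p).take k) []
      refine Relation.ReflTransGen.head (b := (Step.N :: p).take k ++ Step.E ::
        (Step.N :: p).drop k) ?_ ?_
      · refine ⟨[], (Step.N :: p).take k, (Step.N :: p).drop k, ?_, ?_, ?_, ?_, ?_, ?_⟩
        · cases k with
          | zero => omega
          | succ k => simp
        · cases k with
          | zero => omega
          | succ k => simp
        · rwa [isBallot_iff]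
        · intro k' hk' hk'' hb
          rw [isBallot_iff, List.take_take] at hb
          rw [List.length_take] at hk''
          have h6 : k' < k := by omega
          rw [min_eq_left h6.le] at hb
          exact hmin _ h6 ⟨hk', hb⟩
        · rw [List.take_append_drop]; rfl
        · simp
      · rw [List.append_nil, ← List.append_assoc, List.take_append_drop, List.append_nil] at h3
        exact h3

theorem decomp_forward {m k : ℕ} {P Q' Q'' : List Step}
    (h : TamariLE m P (Q' ++ Step.E :: Q'')) (hQ' : hrun m k Q' = some 0)
    (hQ'' : hrun m 0 Q'' = some 0) :
    ∃ p₁ p₂ p'', P = p₁ ++ Step.E :: (p₂ ++ p'') ∧ hrun m k p₁ = some 0 ∧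
      hrun m 0 p₂ = some 0 ∧ hrun m 0 p'' = some 0 ∧ TamariLE m (p₁ ++ p₂) Q' ∧
      TamariLE m p'' Q'' := by
  unfold TamariLE at h
  induction h using Relation.ReflTransGen.head_induction_on with
  | refl => exact ⟨Q', [], Q'', by simp, hQ', rfl, hQ'',
      by rw [List.append_nil]; exact Relation.ReflTransGen.refl, Relation.ReflTransGen.refl⟩
  | head hc _ ih =>
    rename_i P R
    obtain ⟨r₁, r₂, r'', hR, h1, h2, h3, h4, h5⟩ := ih
    obtain ⟨w₁, S, w₂, s1, s2, s3, s4, rfl, hR'⟩ := hc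
    have s3' := (isBallot_iff m S).1 s3
    have cov : ∀ a b, TamariCovers m (a ++ Step.E :: (S ++ b)) (a ++ S ++ Step.E :: b) :=
      fun a b => ⟨a, S, b, s1, s2, s3, s4, rfl, rfl⟩
    have hC : hrun m (k + 1) (r₁ ++ [Step.E]) = some 0 := by
      rw [hrun_append_some (hrun_add m 1 r₁ _ _ h1)]; rfl
    have hD : hrun m 0 (r₂ ++ r'') = some 0 := by
      rw [hrun_append_some h2]; exact h3
    have hCD : hrun m (k + 1) ((r₁ ++ [Step.E]) ++ (r₂ ++ r'')) = some 0 := by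
      rw [hrun_append_some hC]; exact hD
    have he : (r₁ ++ [Step.E]) ++ (r₂ ++ r'') = w₁ ++ S ++ Step.E :: w₂ := by
      rw [← hR', hR]; simp
    rcases no_straddle hCD hC s3' he with ⟨w', hw, rfl⟩ | ⟨w', hw, rfl⟩
    · rcases List.eq_nil_or_concat w' with rfl | ⟨w'', e, rfl⟩
      · have hr : r₁ = w₁ ++ S := (List.append_inj' hw rfl).1
        subst hr
        obtain ⟨g, hg1, hg2⟩ := hrun_left_part h1
        rw [hrun_lift g s3'] at hg2
        have : g = 0 := by simpa using hg2
        subst this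
        refine ⟨w₁, S ++ r₂, r'', by simp, hg1, ?_, h3, by simpa using h4, h5⟩
        rw [hrun_append_some s3']; exact h2
      · have hr : r₁ ++ [Step.E] = (w₁ ++ S ++ Step.E :: w'') ++ [e] := by simpa using hw
        obtain ⟨hr1, he1⟩ := List.append_inj' hr rfl
        simp at he1
        subst he1
        subst hr1
        refine ⟨w₁ ++ Step.E :: (S ++ w''), r₂, r'', by simp, ?_, h2, h3, ?_, h5⟩
        · rw [(cov w₁ w'').hrun_eq]; exact h1
        · exact Relation.ReflTransGen.head ((cov w₁ w'').context [] r₂) h4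
    · rcases no_straddle hD h2 s3' hw with ⟨w₃, hw3, rfl⟩ | ⟨w₃, hw3, rfl⟩
      · refine ⟨r₁, w' ++ Step.E :: (S ++ w₃), r'', by simp, h1, ?_, h3, ?_, h5⟩
        · rw [(cov w' w₃).hrun_eq, ← hw3]; exact h2
        · refine Relation.ReflTransGen.head ?_ h4
          have := (cov w' w₃).context r₁ []
          rw [← hw3] at this
          simpa using this
      · refine ⟨r₁, r₂, w₃ ++ Step.E :: (S ++ w₂), by simp, h1, h2, ?_, h4, ?_⟩
        · rw [(cov w₃ w₂).hrun_eq, ← hw3]; exact h3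
        · refine Relation.ReflTransGen.head ?_ h5
          rw [hw3]; exact cov w₃ w₂

theorem decomp_backward {m : ℕ} {p₁ p₂ p'' Q' Q'' : List Step}
    (h2 : hrun m 0 p₂ = some 0) (h4 : TamariLE m (p₁ ++ p₂) Q') (h5 : TamariLE m p'' Q'') :
    TamariLE m (p₁ ++ Step.E :: (p₂ ++ p'')) (Q' ++ Step.E :: Q'') := by
  have a1 := (le_move _ p₂ rfl h2).context p₁ p''
  have a2 := h4.context [] (Step.E :: p'')
  have a3 := h5.context (Q' ++ [Step.E]) []
  simp only [List.nil_append, List.append_nil, List.append_assoc, List.cons_append] at a1 a2 a3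
  exact (a1.trans a2).trans a3

/-- First passage decomposition. -/
theorem first_passage {m : ℕ} : ∀ (Q : List Step) (k : ℕ), hrun m (k + 1) Q = some 0 →
    ∃ Q' Q'', Q = Q' ++ Step.E :: Q'' ∧ hrun m k Q' = some 0 ∧ hrun m 0 Q'' = some 0 := by
  intro Q
  induction Q with
  | nil => intro k h; simp [hrun] at h
  | cons s Q ih =>
    intro k h
    cases s with
    | N =>
      simp only [hrun] at h
      rw [show k + 1 + m = (k + m) + 1 by omega] at h
      obtain ⟨Q', Q'', rfl, h1, h2⟩ := ih _ h
      exact ⟨Step.N :: Q', Q'', rfl, by simpa [hrun] using h1, h2⟩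
    | E =>
      simp only [hrun] at h
      cases k with
      | zero => exact ⟨[], Q, rfl, rfl, h⟩
      | succ k =>
        obtain ⟨Q', Q'', rfl, h1, h2⟩ := ih _ h
        exact ⟨Step.E :: Q', Q'', rfl, by simpa [hrun] using h1, h2⟩

theorem first_passage_unique {m : ℕ} : ∀ (Q R : List Step) (k : ℕ) (Q' R' : List Step),
    hrun m k Q = some 0 → hrun m k R = some 0 →
    Q ++ Step.E :: Q' = R ++ Step.E :: R' → Q = R ∧ Q' = R' := by
  intro Q
  induction Q with
  | nil =>
    intro R k Q' R' h1 h2 h3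
    have hk : k = 0 := by simpa [hrun] using h1
    subst hk
    cases R with
    | nil => simpa using h3
    | cons s R =>
      simp at h3
      obtain ⟨rfl, _⟩ := h3
      simp [hrun] at h2
  | cons s Q ih =>
    intro R k Q' R' h1 h2 h3
    cases R with
    | nil =>
      have hk : k = 0 := by simpa [hrun] using h2
      subst hk
      simp at h3
      obtain ⟨rfl, _⟩ := h3
      simp [hrun] at h1
    | cons s' R =>
      simp at h3
      obtain ⟨rfl, h3⟩ := h3
      cases s with
      | N =>
        obtain ⟨rfl, rfl⟩ := ih R (k + m) Q' R' (by simpa [hrun] using h1)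
          (by simpa [hrun] using h2) h3
        exact ⟨rfl, rfl⟩
      | E =>
        cases k with
        | zero => simp [hrun] at h1
        | succ k =>
          obtain ⟨rfl, rfl⟩ := ih R k Q' R' (by simpa [hrun] using h1)
            (by simpa [hrun] using h2) h3
          exact ⟨rfl, rfl⟩

theorem le_N_iff {m : ℕ} {P Q : List Step} (hQ : hrun m 0 (Step.N :: Q) = some 0) :
    TamariLE m P (Step.N :: Q) ↔ ∃ P', P = Step.N :: P' ∧ TamariLE m P' Q := by
  constructor
  · intro h
    unfold TamariLE at h
    induction h using Relation.ReflTransGen.head_induction_on with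
    | refl => exact ⟨Q, rfl, Relation.ReflTransGen.refl⟩
    | head hc hcc ih =>
      have hP := TamariLE.hrun_eq (Relation.ReflTransGen.head hc hcc) 0
      obtain ⟨R, rfl, hR⟩ := ih
      obtain ⟨w₁, S, w₂, s1, s2, s3, s4, rfl, hR'⟩ := hc
      cases w₁ with
      | nil =>
        rw [hQ] at hP
        simp [hrun] at hP
      | cons s w₁ =>
        simp at hR'
        obtain ⟨rfl, rfl⟩ := hR'
        exact ⟨_, rfl, Relation.ReflTransGen.head ⟨w₁, S, w₂, s1, s2, s3, s4, rfl, by simp⟩ hR⟩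
  · rintro ⟨P', rfl, h⟩
    simpa using h.context [Step.N] []

theorem le_nil_iff {m : ℕ} {P : List Step} : TamariLE m P [] ↔ P = [] := by
  constructor
  · intro h
    have := h.length_eq
    simpa using this
  · rintro rfl; exact Relation.ReflTransGen.refl

section

/-- Number of contacts with the bottom line. -/
def contacts (m : ℕ) : ℕ → List Step → ℕ
  | k, [] => if k = 0 then 1 else 0
  | k, Step.N :: w => (if k = 0 then 1 else 0) + contacts m (k + m) w
  | 0, Step.E :: _ => 0
  | k + 1, Step.E :: w => contacts m k w

theorem contacts_first_passage (m : ℕ) (p q : List Step) : ∀ k, hrun m k p = some 0 →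
    contacts m (k + 1) (p ++ Step.E :: q) = contacts m 0 q := by
  induction p with
  | nil =>
    intro k h
    have hk : k = 0 := by simpa [hrun] using h
    subst hk
    simp [contacts]
  | cons s p ih =>
    intro k h
    cases s with
    | N =>
      simp only [hrun] at h
      have := ih _ h
      simp only [List.cons_append, contacts]
      rw [show k + 1 + m = k + m + 1 by omega, this]
      simp
    | E =>
      cases k with
      | zero => simp [hrun] at h
      | succ k => simp only [List.cons_append, contacts]; exact ih _ h

theorem contacts_append (m : ℕ) (p q : List Step) : ∀ k, hrun m k p = some 0 →
    contacts m k (p ++ q) + 1 = contacts m k p + contacts m 0 q := by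
  induction p with
  | nil =>
    intro k h
    have hk : k = 0 := by simpa [hrun] using h
    subst hk
    simp [contacts]; omega
  | cons s p ih =>
    intro k h
    cases s with
    | N =>
      simp only [hrun] at h
      have := ih _ h
      simp only [List.cons_append, contacts]
      omega
    | E =>
      cases k with
      | zero => simp [hrun] at h
      | succ k => simp only [List.cons_append, contacts]; exact ih _ h

/-- Positions of the contacts. -/
def cpos (m k : ℕ) (P : List Step) : Finset ℕ :=
  (Finset.range (P.length + 1)).filter (fun i => hrun m k (P.take i) = some 0)

theorem sum_cpos {M : Type*} [AddCommMonoid M] (m : ℕ) (f : ℕ → M) (P : List Step) :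
    ∀ k, hrun m k P = some 0 → ∑ i ∈ cpos m k P, f (contacts m 0 (P.drop i)) =
      ∑ i ∈ Finset.range (contacts m k P), f (i + 1) := by
  induction P with
  | nil =>
    intro k h
    have hk : k = 0 := by simpa [hrun] using h
    subst hk
    simp [cpos, contacts, hrun, Finset.sum_filter]
  | cons s P ih =>
    intro k h
    cases s with
    | N =>
      simp only [hrun] at h
      have := ih _ h
      simp only [cpos, Finset.sum_filter] at this ⊢
      rw [List.length_cons, Finset.sum_range_succ']
      simp only [List.take_succ_cons, hrun, List.drop_succ_cons, List.take_zero, List.drop_zero]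
      rw [this]
      by_cases hk : k = 0
      · subst hk
        simp only [contacts, if_true, zero_add]
        rw [add_comm 1, Finset.sum_range_succ]
      · simp [contacts, hk]
    | E =>
      cases k with
      | zero => simp [hrun] at h
      | succ k =>
        simp only [hrun] at h
        have := ih _ h
        simp only [cpos, Finset.sum_filter] at this ⊢
        rw [List.length_cons, Finset.sum_range_succ']
        simp only [List.take_succ_cons, hrun, List.drop_succ_cons, List.take_zero, List.drop_zero]
        rw [this]
        simp [contacts]

/-- Length of the initial ascent. -/
def asc : List Step → ℕ
  | Step.N :: w => asc w + 1
  | _ => 0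

/-- Product of the inverse factorials of the non-initial ascents. -/
def wt : List Step → ℚ
  | [] => 1
  | Step.N :: w => wt w
  | Step.E :: w => wt w / (asc w).factorial

theorem asc_append (p q : List Step) : asc (p ++ Step.E :: q) = asc p := by
  induction p with
  | nil => simp [asc]
  | cons s p ih => cases s <;> simp [asc, ih]

theorem wt_append (p q : List Step) :
    wt (p ++ Step.E :: q) = wt p * (wt q / (asc q).factorial) := by
  induction p with
  | nil => simp [wt]
  | cons s p ih =>
    cases s with
    | N => simp [wt, ih]
    | E => simp only [List.cons_append, wt, ih, asc_append]; ring

theorem asc_le (p : List Step) : asc p ≤ northCount p := by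
  induction p with
  | nil => simp [asc]
  | cons s p ih => cases s <;> simp [asc, ih]

instance : Finite Step := Finite.of_injective (fun s : Step => decide (s = Step.N)) (by
  intro a b; cases a <;> cases b <;> simp)

/-- Intervals of paths of size `n` starting at height `k`. -/
def ivalSet (m k n : ℕ) : Set (List Step × List Step) :=
  {x | hrun m k x.2 = some 0 ∧ northCount x.2 = n ∧ TamariLE m x.1 x.2}

theorem ivalSet_finite (m k n : ℕ) : (ivalSet m k n).Finite := by
  refine Set.Finite.subset (((List.finite_length_eq Step (k + m * n + n)).prod
    (List.finite_length_eq Step (k + m * n + n)))) ?_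
  rintro ⟨p, q⟩ ⟨h1, h2, h3⟩
  have e := hrun_count _ _ _ _ h1
  have e2 := h3.length_eq
  have e3 := length_eq_counts q
  simp only at *
  rw [h2] at e e3
  simp only [Set.mem_prod, Set.mem_ofPred_eq]
  omega

/-- The same, as a finset. -/
noncomputable def ival (m k n : ℕ) : Finset (List Step × List Step) :=
  (ivalSet_finite m k n).toFinset

theorem mem_ival {m k n : ℕ} {x : List Step × List Step} : x ∈ ival m k n ↔
    hrun m k x.2 = some 0 ∧ northCount x.2 = n ∧ TamariLE m x.1 x.2 := by
  simp [ival, ivalSet]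

/-- Intervals with given initial ascent of the upper path. -/
noncomputable def ivalj (m k n j : ℕ) : Finset (List Step × List Step) :=
  (ival m k n).filter (fun x => asc x.2 = j)

theorem mem_ivalj {m k n j : ℕ} {x : List Step × List Step} : x ∈ ivalj m k n j ↔
    (hrun m k x.2 = some 0 ∧ northCount x.2 = n ∧ TamariLE m x.1 x.2) ∧ asc x.2 = j := by
  simp [ivalj, mem_ival]

theorem sum_decomp {M : Type*} [AddCommMonoid M] (m k n j : ℕ)
    (f : List Step × List Step → M) :
    ∑ x ∈ ivalj m (k + 1) n j, f x = ∑ ab ∈ Finset.HasAntidiagonal.antidiagonal n,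
      ∑ x ∈ ivalj m k ab.1 j, ∑ i ∈ cpos m k x.1, ∑ y ∈ ival m 0 ab.2,
        f (x.1.take i ++ Step.E :: (x.1.drop i ++ y.1), x.2 ++ Step.E :: y.2) := by
  have e : ∀ ab : ℕ × ℕ, ∀ x : List Step × List Step,
      ∑ i ∈ cpos m k x.1, ∑ y ∈ ival m 0 ab.2,
        f (x.1.take i ++ Step.E :: (x.1.drop i ++ y.1), x.2 ++ Step.E :: y.2) =
      ∑ z ∈ cpos m k x.1 ×ˢ ival m 0 ab.2,
        f (x.1.take z.1 ++ Step.E :: (x.1.drop z.1 ++ z.2.1), x.2 ++ Step.E :: z.2.2) :=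
    fun ab x => by rw [Finset.sum_product]
  simp only [e]
  simp only [Finset.sum_sigma']
  symm
  refine Finset.sum_bij (fun z _ => (z.2.1.1.take z.2.2.1 ++ Step.E ::
    (z.2.1.1.drop z.2.2.1 ++ z.2.2.2.1), z.2.1.2 ++ Step.E :: z.2.2.2.2)) ?_ ?_ ?_ ?_
  · rintro ⟨⟨a, b⟩, ⟨p, q⟩, i, p', q'⟩ h
    simp only [Finset.mem_sigma, Finset.HasAntidiagonal.mem_antidiagonal, mem_ivalj, Finset.mem_product,
      mem_ival, cpos, Finset.mem_filter, Finset.mem_range] at h ⊢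
    obtain ⟨hab, ⟨⟨h1, h2, h3⟩, h4⟩, ⟨h5, h6⟩, h7, h8, h9⟩ := h
    have hp : hrun m k p = some 0 := by rw [h3.hrun_eq, h1]
    have hd : hrun m 0 (p.drop i) = some 0 := by
      rw [← hrun_append_some (v := p.drop i) h6, List.take_append_drop]; exact hp
    refine ⟨⟨?_, ?_, ?_⟩, ?_⟩
    · rw [hrun_append_some (hrun_add m 1 q _ _ h1)]; exact h7
    · simp; omega
    · exact decomp_backward hd (by rw [List.take_append_drop]; exact h3) h9
    · rw [asc_append, h4]
  · rintro ⟨⟨a, b⟩, ⟨p, q⟩, i, p', q'⟩ h ⟨⟨a₂, b₂⟩, ⟨p₂, q₂⟩, i₂, p₂', q₂'⟩ hh heq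
    simp only [Finset.mem_sigma, Finset.HasAntidiagonal.mem_antidiagonal, mem_ivalj, Finset.mem_product,
      mem_ival, cpos, Finset.mem_filter, Finset.mem_range, Prod.mk.injEq] at h hh heq
    obtain ⟨hab, ⟨⟨h1, h2, h3⟩, h4⟩, ⟨h5, h6⟩, h7, h8, h9⟩ := h
    obtain ⟨gab, ⟨⟨g1, g2, g3⟩, g4⟩, ⟨g5, g6⟩, g7, g8, g9⟩ := hh
    obtain ⟨e1, e2⟩ := heq
    obtain ⟨rfl, rfl⟩ := first_passage_unique _ _ _ _ _ h1 g1 e2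
    obtain ⟨e3, e4⟩ := first_passage_unique _ _ _ _ _ h6 g6 e1
    obtain ⟨e5, rfl⟩ := List.append_inj' e4 (by rw [h9.length_eq, g9.length_eq])
    have e6 : p = p₂ := by
      rw [← List.take_append_drop i p, ← List.take_append_drop i₂ p₂, e3, e5]
    subst e6
    have e7 := congrArg List.length e3
    rw [List.length_take, List.length_take] at e7
    have e8 : i = i₂ := by omega
    subst e8
    subst h2 g2 h8 g8
    rfl
  · rintro ⟨P, Q⟩ h
    simp only [mem_ivalj] at h
    obtain ⟨⟨h1, h2, h3⟩, h4⟩ := h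
    obtain ⟨Q', Q'', rfl, hQ', hQ''⟩ := first_passage _ _ h1
    obtain ⟨p₁, p₂, p'', rfl, g1, g2, g3, g4, g5⟩ := decomp_forward h3 hQ' hQ''
    refine ⟨⟨(northCount Q', northCount Q''), (p₁ ++ p₂, Q'), p₁.length, p'', Q''⟩, ?_, ?_⟩
    · simp only [Finset.mem_sigma, Finset.HasAntidiagonal.mem_antidiagonal, mem_ivalj, Finset.mem_product,
        mem_ival, cpos, Finset.mem_filter, Finset.mem_range]
      rw [asc_append] at h4
      simp at h2
      refine ⟨h2, ⟨⟨hQ', trivial, g4⟩, h4⟩, ⟨by simp, by simpa using g1⟩, hQ'', trivial, g5⟩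
    · simp
  · intros; rfl

open Polynomial

/-- Generating polynomial of the contacts. -/
noncomputable def gp (m k n j : ℕ) : ℚ[X] :=
  ∑ x ∈ ivalj m k n j, C (wt x.2) * X ^ contacts m k x.1

/-- Full generating polynomial. -/
noncomputable def fp (m n : ℕ) : ℚ[X] :=
  ∑ x ∈ ival m 0 n, C (wt x.2 / (asc x.2).factorial) * X ^ contacts m 0 x.1

theorem fp_eq (m n : ℕ) : fp m n = ∑ j ∈ Finset.range (n + 1), C (1 / (j.factorial : ℚ)) * gp m 0 n j := by
  unfold fp gp ivalj
  rw [← Finset.sum_fiberwise_of_maps_to (s := ival m 0 n) (t := Finset.range (n + 1))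
    (g := fun x => asc x.2)]
  · refine Finset.sum_congr rfl fun j _ => ?_
    rw [Finset.mul_sum]
    refine Finset.sum_congr rfl fun x hx => ?_
    rw [(Finset.mem_filter.1 hx).2, ← mul_assoc, ← C_mul]
    congr 2; ring
  · intro x hx
    have := (mem_ival.1 hx).2.1
    have h2 := asc_le x.2
    simp; omega

theorem gp_zero_of_lt (m k n j : ℕ) (h : n < j) : gp m k n j = 0 := by
  unfold gp
  refine Finset.sum_eq_zero fun x hx => ?_
  have h1 := (mem_ivalj.1 hx)
  have h2 := asc_le x.2
  omega

theorem contacts_pos (m : ℕ) (P : List Step) : ∀ k, hrun m k P = some 0 → 1 ≤ contacts m k P := by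
  induction P with
  | nil => intro k h; have : k = 0 := by simpa [hrun] using h
           simp [contacts, this]
  | cons s P ih =>
    intro k h
    cases s with
    | N => simp only [hrun] at h; have := ih _ h; simp only [contacts]; omega
    | E =>
      cases k with
      | zero => simp [hrun] at h
      | succ k => simp only [hrun] at h; have := ih _ h; simp only [contacts]; omega

theorem gp_rec (m k n j : ℕ) : (X - 1) * gp m (k + 1) n j =
    ∑ ab ∈ Finset.HasAntidiagonal.antidiagonal n, fp m ab.2 * (gp m k ab.1 j - C ((gp m k ab.1 j).eval 1)) := by
  unfold gp
  rw [sum_decomp, Finset.mul_sum]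
  refine Finset.sum_congr rfl fun ab _ => ?_
  rw [eval_finsetSum, map_sum, ← Finset.sum_sub_distrib, Finset.mul_sum, Finset.mul_sum]
  refine Finset.sum_congr rfl fun x hx => ?_
  obtain ⟨⟨h1, h2, h3⟩, h4⟩ := mem_ivalj.1 hx
  have hp : hrun m k x.1 = some 0 := by rw [h3.hrun_eq, h1]
  have e : ∀ i ∈ cpos m k x.1, ∀ y ∈ ival m 0 ab.2,
      (C (wt (x.2 ++ Step.E :: y.2)) *
        X ^ contacts m (k + 1) (x.1.take i ++ Step.E :: (x.1.drop i ++ y.1)) : ℚ[X]) =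
      (C (wt x.2) * X ^ (contacts m 0 (x.1.drop i) - 1)) *
        (C (wt y.2 / (asc y.2).factorial) * X ^ contacts m 0 y.1) := by
    intro i hi y hy
    have hi' := (Finset.mem_filter.1 hi).2
    have hd : hrun m 0 (x.1.drop i) = some 0 := by
      rw [← hrun_append_some (v := x.1.drop i) hi', List.take_append_drop]; exact hp
    rw [contacts_first_passage _ _ _ _ hi', wt_append, C_mul]
    have e1 := contacts_append m (x.1.drop i) y.1 0 hd
    have e2 := contacts_pos m _ _ hd
    rw [show contacts m 0 (x.1.drop i ++ y.1) = (contacts m 0 (x.1.drop i) - 1) +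
      contacts m 0 y.1 by omega, pow_add]
    ring
  rw [Finset.sum_congr rfl fun i hi => Finset.sum_congr rfl fun y hy => e i hi y hy]
  rw [Finset.sum_congr rfl fun i hi => (Finset.mul_sum _ _ _).symm, ← Finset.sum_mul]
  rw [sum_cpos m (fun c => (C (wt x.2) * X ^ (c - 1) : ℚ[X])) x.1 k hp]
  simp only [Nat.add_sub_cancel]
  rw [← Finset.mul_sum]
  have := mul_geom_sum (X : ℚ[X]) (contacts m k x.1)
  change _ = fp m ab.2 * _
  simp only [eval_mul, eval_C, eval_pow, eval_X, one_pow, mul_one]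
  change (X - 1) * (C (wt x.2) * _ * fp m ab.2) = _
  linear_combination (C (wt x.2) * fp m ab.2) * this

theorem gp_base (m : ℕ) : gp m 0 0 0 = X := by
  have : ivalj m 0 0 0 = {([], [])} := by
    ext ⟨p, q⟩
    rw [mem_ivalj, Finset.mem_singleton]
    constructor
    · rintro ⟨⟨h1, h2, h3⟩, h4⟩
      have e := hrun_count _ _ _ _ h1
      have e1 := h3.length_eq
      have e3 := length_eq_counts q
      simp only at *
      rw [h2] at e e3
      have hq : q = [] := by rw [← List.length_eq_zero_iff]; omega
      have hp : p = [] := by rw [← List.length_eq_zero_iff]; omega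
      rw [hq, hp]
    · intro h
      obtain ⟨rfl, rfl⟩ := Prod.mk.inj h
      exact ⟨⟨rfl, rfl, Relation.ReflTransGen.refl⟩, rfl⟩
  rw [gp, this]
  simp [wt, contacts]

theorem gp_succ_zero (m n : ℕ) : gp m 0 (n + 1) 0 = 0 := by
  unfold gp
  refine Finset.sum_eq_zero fun x hx => ?_
  obtain ⟨⟨h1, h2, h3⟩, h4⟩ := mem_ivalj.1 hx
  exfalso
  obtain ⟨p, q⟩ := x
  cases q with
  | nil => simp at h2
  | cons s q => cases s with
    | N => simp [asc] at h4
    | E => simp [hrun] at h1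

theorem gp_succ_succ (m n j : ℕ) : gp m 0 (n + 1) (j + 1) = X * gp m m n j := by
  unfold gp
  rw [Finset.mul_sum]
  symm
  refine Finset.sum_bij (fun x _ => (Step.N :: x.1, Step.N :: x.2)) ?_ ?_ ?_ ?_
  · rintro ⟨p, q⟩ h
    rw [mem_ivalj] at h ⊢
    obtain ⟨⟨h1, h2, h3⟩, h4⟩ := h
    simp only at h1 h2 h3 h4
    have h5 : hrun m 0 (Step.N :: q) = some 0 := by simpa [hrun] using h1
    exact ⟨⟨h5, by simp [h2], (le_N_iff h5).2 ⟨p, rfl, h3⟩⟩, by simp [asc, h4]⟩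
  · rintro ⟨p, q⟩ _ ⟨p', q'⟩ _ h
    simpa using h
  · rintro ⟨p, q⟩ h
    rw [mem_ivalj] at h
    obtain ⟨⟨h1, h2, h3⟩, h4⟩ := h
    simp only at h1 h2 h3 h4
    cases q with
    | nil => simp at h2
    | cons s q => cases s with
      | N =>
        obtain ⟨p', rfl, h5⟩ := (le_N_iff h1).1 h3
        refine ⟨(p', q), mem_ivalj.2 ⟨⟨by simpa [hrun] using h1, by simpa using h2, h5⟩,
          by simpa [asc] using h4⟩, rfl⟩
      | E => simp [hrun] at h1
  · rintro ⟨p, q⟩ h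
    simp only [contacts, wt]
    rw [if_pos trivial, zero_add, pow_add, pow_one]
    ring

end

section

/-- Number of north steps having exactly `c` east steps before them. -/
def cnt : List Step → ℕ → ℕ
  | [], _ => 0
  | Step.N :: w, c => cnt w c + (if c = 0 then 1 else 0)
  | Step.E :: _, 0 => 0
  | Step.E :: w, c + 1 => cnt w c

theorem cnt_zero (w : List Step) : cnt w 0 = asc w := by
  induction w with
  | nil => rfl
  | cons s w ih => cases s <;> simp [cnt, asc, ih]

theorem cnt_prod (w : List Step) : ∀ K, eastCount w < K →
    ((∏ c ∈ Finset.range K, (cnt w c).factorial : ℕ) : ℚ) * wt w = (asc w).factorial := by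
  induction w with
  | nil => intro K _; simp [cnt, wt, asc]
  | cons s w ih =>
    intro K hK
    obtain ⟨K, rfl⟩ : ∃ L, K = L + 1 := ⟨K - 1, by omega⟩
    cases s with
    | N =>
      have := ih (K + 1) (by simpa using hK)
      rw [Finset.prod_range_succ'] at this ⊢
      simp only [cnt, wt, asc, cnt_zero, Nat.succ_ne_zero, if_false, if_true, add_zero,
        Nat.factorial_succ] at this ⊢
      push_cast at this ⊢
      linear_combination ((asc w : ℚ) + 1) * this
    | E =>
      have := ih K (by simp at hK; omega)
      rw [Finset.prod_range_succ']
      simp only [cnt, wt, asc, Nat.factorial_zero, mul_one, Nat.cast_one]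
      rw [← mul_div_assoc, this, div_self (by positivity)]

/-- Positions of north steps. -/
def npos (w : List Step) : Finset ℕ :=
  (Finset.range w.length).filter (fun p => w[p]? = some Step.N)

theorem mem_npos {w : List Step} {p : ℕ} : p ∈ npos w ↔ w[p]? = some Step.N := by
  simp only [npos, Finset.mem_filter, Finset.mem_range, and_iff_right_iff_imp]
  intro h
  by_contra h2
  rw [List.getElem?_eq_none (by omega)] at h
  simp at h

theorem sum_npos (w : List Step) (f : ℕ → ℕ) :
    ∀ L, w.length ≤ L → ∑ p ∈ npos w, f p = ∑ p ∈ Finset.range L, if w[p]? = some Step.N then f p else 0 := by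
  intro L hL
  rw [← Finset.sum_filter]
  congr 1
  ext p
  rw [mem_npos, Finset.mem_filter, Finset.mem_range]
  refine ⟨fun h => ⟨?_, h⟩, fun h => h.2⟩
  by_contra h2
  rw [List.getElem?_eq_none (by omega)] at h
  simp at h

theorem card_npos (w : List Step) : (npos w).card = northCount w := by
  rw [Finset.card_eq_sum_ones, sum_npos w _ _ le_rfl]
  induction w with
  | nil => simp
  | cons s w ih =>
    rw [List.length_cons, Finset.sum_range_succ']
    simp only [List.getElem?_cons_succ, ih]
    cases s <;> simp

theorem card_npos_block (w : List Step) : ∀ c,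
    ((npos w).filter (fun p => eastCount (w.take p) = c)).card = cnt w c := by
  induction w with
  | nil => intro c; simp [npos, cnt]
  | cons s w ih =>
    intro c
    simp only [Finset.card_filter, sum_npos w _ _ le_rfl] at ih ⊢
    rw [sum_npos _ _ _ le_rfl, List.length_cons, Finset.sum_range_succ']
    simp only [List.getElem?_cons_succ, List.take_succ_cons]
    cases s with
    | N =>
      simp only [eastCount_N, ih, cnt]
      simp [@eq_comm _ 0 c]
    | E =>
      cases c with
      | zero => simp [cnt]
      | succ c => simpa [cnt] using ih c

theorem card_labelling (n : ℕ) (Q : List Step) (hQ : northCount Q = n) :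
    (Nat.card {lab // IsLabelling n Q lab} : ℚ) = n.factorial * (wt Q / (asc Q).factorial) := by
  classical
  set e := (npos Q).orderEmbOfFin (k := n) (by rw [card_npos, hQ]) with he
  set b : ℕ → ℕ := fun p => eastCount (Q.take p) with hb
  have bmono : Monotone b := by
    intro p q hpq
    simp only [hb, eastCount]
    apply List.Sublist.length_le
    apply List.Sublist.filter
    rw [show Q.take p = (Q.take q).take p by rw [List.take_take, min_eq_left hpq]]
    exact List.take_sublist p _
  have bstep : ∀ p, Q[p]? = some Step.E → b (p + 1) = b p + 1 := by
    intro p hp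
    simp [hb, List.take_add_one, hp]
  have emem : ∀ i, Q[e i]? = some Step.N := fun i =>
    mem_npos.1 (Finset.orderEmbOfFin_mem _ _ i)
  have esurj : ∀ p, Q[p]? = some Step.N → ∃ i, e i = p := by
    intro p hp
    have h1 : p ∈ Set.range e := by
      rw [he, Finset.range_orderEmbOfFin]; exact mem_npos.2 hp
    exact h1
  have between : ∀ p q r, p ≤ r → r < q → b p = b q → Q[q]? = some Step.N →
      Q[r]? = some Step.N := by
    intro p q r h1 h2 h3 h4
    have hq : q < Q.length := by
      by_contra h
      rw [List.getElem?_eq_none (by omega)] at h4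
      simp at h4
    have hr : Q[r]? = some Q[r] := List.getElem?_eq_getElem (by omega)
    cases hs : Q[r] with
    | N => rw [hr, hs]
    | E =>
      have h5 := bstep r (by rw [hr, hs])
      have h6 := bmono h1
      have h7 := bmono (show r + 1 ≤ q by omega)
      omega
  set h : Fin n → ℕ := fun i => b (e i) with hh
  have hmono : Monotone h := fun i j hij => bmono (e.monotone hij)
  -- every labelling comes from a permutation
  have perm : ∀ L, IsLabelling n Q L → ∃ σ : Equiv.Perm (Fin n), ∀ i, L i = e (σ i) := by
    intro L hL
    choose s hs using fun i => esurj (L i) (hL.2.1 i)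
    have sinj : Function.Injective s := by
      intro i j hij
      apply hL.1
      rw [← hs i, ← hs j, hij]
    exact ⟨Equiv.ofBijective s (Finite.injective_iff_bijective.1 sinj), fun i => (hs i).symm⟩
  have tie : ∀ L, IsLabelling n Q L → ∀ d, ∀ i j, L j = L i + d + 1 → b (L i) = b (L j) →
      i < j := by
    intro L hL d
    obtain ⟨σ, hσ⟩ := perm L hL
    induction d with
    | zero => intro i j h1 _; exact hL.2.2 i j h1
    | succ d ih =>
      intro i j h1 h2
      have h3 := between (L i) (L j) (L i + 1) (by omega) (by omega) h2 (hL.2.1 j)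
      obtain ⟨k', hk'⟩ := esurj _ h3
      have hk : L (σ.symm k') = L i + 1 := by rw [hσ]; simp [hk']
      have h4 := hL.2.2 i _ hk
      have h5 := bmono (show L i ≤ L (σ.symm k') by omega)
      have h6 := bmono (show L (σ.symm k') ≤ L j by omega)
      exact h4.trans (ih (σ.symm k') j (by omega) (by omega))
  have toSort : ∀ L, IsLabelling n Q L → ∀ i, L i = e ((Tuple.sort (b ∘ L)).symm i) := by
    intro L hL i
    obtain ⟨σ, hσ⟩ := perm L hL
    have : σ.symm = Tuple.sort (b ∘ L) := by
      rw [Tuple.eq_sort_iff]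
      constructor
      · intro i j hij
        simp only [Function.comp, hσ, Equiv.apply_symm_apply]
        exact hmono hij
      · intro i j hij h2
        simp only [Function.comp] at h2
        have h3 : L (σ.symm i) < L (σ.symm j) := by
          simp only [hσ, Equiv.apply_symm_apply]; exact e.strictMono hij
        exact tie L hL (L (σ.symm j) - L (σ.symm i) - 1) _ _ (by omega) h2
    rw [← this, Equiv.symm_symm, hσ]
  set O := Finset.univ.image (fun σ : Equiv.Perm (Fin n) => h ∘ σ) with hO
  have bij : Nat.card {lab // IsLabelling n Q lab} = O.card := by
    have hc : Nat.card {g // g ∈ O} = O.card := by simp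
    rw [← hc]
    refine Nat.card_eq_of_bijective (fun L => ⟨b ∘ L.1, ?_⟩) ⟨?_, ?_⟩
    · obtain ⟨σ, hσ⟩ := perm L.1 L.2
      simp only [hO, Finset.mem_image, Finset.mem_univ, true_and]
      exact ⟨σ, by funext i; simp [hh, hσ]⟩
    · rintro ⟨L, hL⟩ ⟨L', hL'⟩ heq
      simp only [Subtype.mk.injEq] at heq ⊢
      funext i
      rw [toSort L hL, toSort L' hL', heq]
    · rintro ⟨g, hg⟩
      simp only [hO, Finset.mem_image, Finset.mem_univ, true_and] at hg
      obtain ⟨σ, hσ⟩ := hg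
      have e1 : g ∘ Tuple.sort g = h := by
        have := Tuple.unique_monotone (f := g) (σ := Tuple.sort g) (τ := σ.symm)
          (Tuple.monotone_sort g) (by rw [← hσ]; intro i j hij; simpa using hmono hij)
        rw [this, ← hσ]; funext i; simp
      refine ⟨⟨fun i => e ((Tuple.sort g).symm i), ?_, fun i => emem _, ?_⟩, ?_⟩
      · intro i j hij; simpa using hij
      · intro i j hij
        simp only at hij
        have h1 : (Tuple.sort g).symm i < (Tuple.sort g).symm j := by
          rw [← e.lt_iff_lt]; omega
        have h2 := (Tuple.eq_sort_iff (f := g) (σ := Tuple.sort g)).1 rfl |>.2 _ _ h1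
        simp only [Equiv.apply_symm_apply] at h2
        apply h2
        have h3 : ∀ i, g i = h ((Tuple.sort g).symm i) := by intro i; rw [← e1]; simp
        rw [h3, h3]
        have h4 : b (e ((Tuple.sort g).symm i) + 1) = b (e ((Tuple.sort g).symm i)) := by
          simp [hb, List.take_add_one, emem]
        simp only [hh, hij, h4]
      · apply Subtype.ext
        funext i
        have : g = h ∘ (Tuple.sort g).symm := by rw [← e1]; funext i; simp
        exact (congrFun this i).symm
  set S := Fintype.card {g : Equiv.Perm (Fin n) // h ∘ g = h} with hS
  have cardO : O.card * S = n.factorial := by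
    have h1 := Finset.card_eq_sum_card_fiberwise (s := (Finset.univ : Finset (Equiv.Perm (Fin n))))
      (t := O) (f := fun σ : Equiv.Perm (Fin n) => h ∘ σ) (by intro σ _; simp [hO])
    rw [Finset.card_univ, Fintype.card_perm, Fintype.card_fin] at h1
    rw [h1, Finset.sum_const_nat (m := S)]
    intro g hg
    obtain ⟨σ, -, rfl⟩ := Finset.mem_image.1 hg
    rw [hS, Fintype.card_subtype]
    refine Finset.card_bij (fun τ _ => τ * σ⁻¹) ?_ ?_ ?_
    · intro τ hτ
      simp only [Finset.mem_filter, Finset.mem_univ, true_and] at hτ ⊢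
      rw [Equiv.Perm.coe_mul, ← Function.comp_assoc, hτ]
      funext i; simp
    · intro τ _ τ' _ hτ; simpa using hτ
    · intro τ hτ
      simp only [Finset.mem_filter, Finset.mem_univ, true_and] at hτ
      refine ⟨τ * σ, ?_, by simp⟩
      simp only [Finset.mem_filter, Finset.mem_univ, true_and]
      rw [Equiv.Perm.coe_mul, ← Function.comp_assoc, hτ]
  have fib : ∀ c, Fintype.card {a // h a = c} = cnt Q c := by
    intro c
    rw [← card_npos_block, Fintype.card_subtype]
    refine Finset.card_bij (fun i _ => e i) ?_ ?_ ?_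
    · intro i hi
      simp only [Finset.mem_filter, Finset.mem_univ, true_and, mem_npos] at hi ⊢
      exact ⟨emem i, hi⟩
    · intro i _ j _ hij; simpa using hij
    · intro p hp
      simp only [Finset.mem_filter, mem_npos] at hp
      obtain ⟨i, rfl⟩ := esurj p hp.1
      exact ⟨i, by simpa [hh] using hp.2, rfl⟩
  have hS2 : S = ∏ c ∈ Finset.range (eastCount Q + 1), (cnt Q c).factorial := by
    rw [hS, DomMulAct.stabilizer_card']
    simp only [fib]
    apply Finset.prod_subset
    · intro c hc
      obtain ⟨i, -, rfl⟩ := Finset.mem_image.1 hc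
      rw [Finset.mem_range]
      have : h i ≤ eastCount Q := by
        simp only [hh, hb, eastCount]
        exact List.Sublist.length_le (List.Sublist.filter _ (List.take_sublist _ _))
      omega
    · intro c _ hc
      rw [← fib]
      have : IsEmpty {a // h a = c} := by
        constructor
        rintro ⟨a, ha⟩
        exact hc (Finset.mem_image.2 ⟨a, Finset.mem_univ _, ha⟩)
      rw [Fintype.card_eq_zero]; rfl
  have h1 := cnt_prod Q (eastCount Q + 1) (by omega)
  rw [← hS2] at h1
  rw [bij, ← cardO]
  have h2 : ((asc Q).factorial : ℚ) ≠ 0 := by positivity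
  field_simp
  push_cast
  rw [← h1]; ring

theorem card_labelled_eq (m n : ℕ) :
    (Nat.card {x : (List Step × List Step) × (Fin n → ℕ) //
        IsLabelledTamariInterval m n x} : ℚ) = n.factorial * (fp m n).eval 1 := by
  classical
  have e : {x : (List Step × List Step) × (Fin n → ℕ) // IsLabelledTamariInterval m n x} ≃
      Σ x : ival m 0 n, {lab // IsLabelling n x.1.2 lab} :=
    { toFun := fun x => ⟨⟨x.1.1, by
          obtain ⟨h1, h2, h3, h4, h5, h6⟩ := x.2
          exact mem_ival.2 ⟨(isBallot_iff _ _).1 h3, h4, h5⟩⟩, ⟨x.1.2, x.2.2.2.2.2.2⟩⟩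
      invFun := fun y => ⟨(y.1.1, y.2.1), by
          obtain ⟨h1, h2, h3⟩ := mem_ival.1 y.1.2
          refine ⟨(isBallot_iff _ _).2 (by rw [h3.hrun_eq, h1]), by rw [h3.north_eq.1, h2],
            (isBallot_iff _ _).2 h1, h2, h3, y.2.2⟩⟩
      left_inv := fun x => rfl
      right_inv := fun y => rfl }
  have fin : ∀ x : ival m 0 n, Finite {lab // IsLabelling n x.1.2 lab} := by
    intro x
    have : Finite (Fin n → Fin x.1.2.length) := inferInstance
    refine Finite.of_injective (β := Fin n → Fin x.1.2.length) (fun L i => ⟨L.1 i, ?_⟩) ?_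
    · by_contra h
      have := L.2.2.1 i
      rw [List.getElem?_eq_none (by omega)] at this
      simp at this
    · intro L L' h
      apply Subtype.ext
      funext i
      have := congrFun h i
      simpa using this
  rw [Nat.card_congr e, Nat.card_sigma]
  push_cast
  have : ∀ x : ival m 0 n, (Nat.card {lab // IsLabelling n x.1.2 lab} : ℚ) =
      n.factorial * (wt x.1.2 / (asc x.1.2).factorial) := fun x =>
    card_labelling n x.1.2 (mem_ival.1 x.2).2.1
  simp only [this]
  rw [fp, Polynomial.eval_finsetSum, Finset.mul_sum,
    Finset.sum_coe_sort (ival m 0 n)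
      (fun x => (n.factorial : ℚ) * (wt x.2 / (asc x.2).factorial))]
  simp

end

section
open Polynomial

/-- Lagrange functional over a domain. -/
theorem lagrange_sum {ι R : Type*} [DecidableEq ι] [CommRing R] [IsDomain R] (s : Finset ι)
    (m : ℕ) (hs : s.card = m + 1) (v l : ι → R)
    (hl : ∀ i ∈ s, l i * ∏ j ∈ s.erase i, (v i - v j) = 1) (P : R[X]) (hP : P.natDegree ≤ m) :
    ∑ i ∈ s, l i * P.eval (v i) = P.coeff m := by
  let K := FractionRing R
  have hinj : Function.Injective (algebraMap R K) := IsFractionRing.injective R K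
  apply hinj
  have hvs : Set.InjOn (fun i => algebraMap R K (v i)) s := by
    intro i hi j hj hij
    by_contra hne
    have h1 := hl i hi
    rw [Finset.prod_eq_zero (i := j) (Finset.mem_erase.2 ⟨fun h => hne h.symm, hj⟩)
      (by rw [hinj hij, sub_self]), mul_zero] at h1
    exact zero_ne_one h1
  have := Lagrange.coeff_eq_sum hvs (P := P.map (algebraMap R K)) (by
    rw [hs]
    refine lt_of_le_of_lt (degree_map_le) (lt_of_le_of_lt degree_le_natDegree ?_)
    exact_mod_cast Nat.lt_succ_of_le hP)
  rw [hs, Nat.add_sub_cancel, coeff_map] at this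
  rw [this, map_sum]
  refine Finset.sum_congr rfl fun i hi => ?_
  have h1 := congrArg (algebraMap R K) (hl i hi)
  rw [map_mul, map_prod, map_one] at h1
  simp only [map_sub] at h1
  rw [eval_map, eval₂_at_apply, map_mul, eq_div_iff]
  · linear_combination (algebraMap R K (eval (v i) P)) * h1
  · intro h0; rw [h0, mul_zero] at h1; exact zero_ne_one h1

theorem lagrange_inv {ι R : Type*} [DecidableEq ι] [CommRing R] [IsDomain R] (s : Finset ι)
    (m : ℕ) (hs : s.card = m + 1) (v l a : ι → R)
    (hl : ∀ i ∈ s, l i * ∏ j ∈ s.erase i, (v i - v j) = 1) (ha : ∀ i ∈ s, a i * v i = 1) :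
    ∑ i ∈ s, l i * a i = (-1) ^ m * ∏ i ∈ s, a i := by
  set P : R[X] := ∏ i ∈ s, (X - C (v i)) with hP
  have hmon : P.Monic := monic_prod_of_monic _ _ fun i _ => monic_X_sub_C _
  have hdeg : P.natDegree = m + 1 := by
    rw [hP, natDegree_prod_of_monic _ _ fun i _ => monic_X_sub_C _]; simp [hs]
  have h1 := lagrange_sum s m hs v l hl P.divX (by rw [natDegree_divX_eq_natDegree_tsub_one, hdeg]; simp)
  rw [coeff_divX, ← hdeg, hmon.coeff_natDegree] at h1
  have h0 : P.coeff 0 = (-1) ^ (m + 1) * ∏ i ∈ s, v i := by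
    rw [coeff_zero_eq_eval_zero, hP, eval_prod]
    simp only [eval_sub, eval_X, eval_C, zero_sub]
    rw [← hs, ← Finset.prod_const, ← Finset.prod_mul_distrib]
    simp
  have hav : (∏ i ∈ s, a i) * ∏ i ∈ s, v i = 1 := by
    rw [← Finset.prod_mul_distrib]; exact Finset.prod_eq_one ha
  have h2 : ∀ i ∈ s, P.divX.eval (v i) = - P.coeff 0 * a i := by
    intro i hi
    have h3 : P.eval (v i) = 0 := by
      rw [hP, eval_prod]; exact Finset.prod_eq_zero hi (by simp)
    have h4 := congrArg (eval (v i)) (divX_mul_X_add P)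
    rw [h3] at h4
    simp only [eval_add, eval_mul, eval_X, eval_C] at h4
    linear_combination (a i) * h4 - (eval (v i) P.divX) * ha i hi
  rw [Finset.sum_congr rfl fun i hi => by rw [h2 i hi]] at h1
  have h5 : (- P.coeff 0) * ∑ i ∈ s, l i * a i = 1 := by
    rw [← h1, Finset.mul_sum]; exact Finset.sum_congr rfl fun i _ => by ring
  rw [h0] at h5
  have h6 : ((-1 : R) ^ m) * (-1) ^ m = 1 := by rw [← mul_pow]; simp
  rw [pow_succ] at h5
  linear_combination ((-1) ^ m * ∏ i ∈ s, a i) * h5 - ((∏ i ∈ s, a i) * (∏ i ∈ s, v i) * ∑ i ∈ s, l i * a i) * h6 - (∑ i ∈ s, l i * a i) * hav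

/-- `s` is the set of the roots of `W ^ (m+1) = v (W-1) ^ m`. -/
def Good (m : ℕ) (v : ℂ) (s : Finset ℂ) : Prop :=
  s.card = m + 1 ∧ v ≠ 0 ∧ (X ^ (m + 1) - C v * (X - 1) ^ m : ℂ[X]) = ∏ w ∈ s, (X - C w)

theorem good_exists (m : ℕ) (v : ℂ) (hv : v ≠ 0) (hv2 : v * m ^ m ≠ (m + 1) ^ (m + 1)) :
    ∃ s, Good m v s := by
  set p : ℂ[X] := X ^ (m + 1) - C v * (X - 1) ^ m with hp
  have hd1 : (C v * (X - 1) ^ m : ℂ[X]).natDegree ≤ m := by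
    refine (natDegree_C_mul_le _ _).trans ?_
    refine natDegree_pow_le.trans ?_
    rw [show (X - 1 : ℂ[X]) = X - C 1 by simp, natDegree_X_sub_C, mul_one]
  have hd : (C v * (X - 1) ^ m : ℂ[X]).degree < ((m + 1 : ℕ) : WithBot ℕ) := by
    refine lt_of_le_of_lt degree_le_natDegree ?_
    exact_mod_cast Nat.lt_succ_of_le hd1
  have hmon : p.Monic := monic_X_pow_sub hd
  have hdeg : p.natDegree = m + 1 := by
    rw [hp, natDegree_sub_eq_left_of_natDegree_lt, natDegree_X_pow]
    rw [natDegree_X_pow]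
    by_cases h0 : (C v * (X - 1) ^ m : ℂ[X]) = 0
    · rw [h0]; simp
    · exact (natDegree_lt_iff_degree_lt h0).2 hd
  have hnd : p.roots.Nodup := by
    rw [Multiset.nodup_iff_count_le_one]
    intro w
    rw [count_roots]
    by_contra h
    obtain ⟨h1, h2⟩ := (one_lt_rootMultiplicity_iff_isRoot hmon.ne_zero).1 (not_le.1 h)
    simp only [hp, IsRoot.def, eval_sub, eval_mul, eval_pow, eval_X, eval_C, eval_one,
      derivative_sub, derivative_mul, derivative_C, derivative_pow,
      derivative_X, derivative_one, zero_mul, sub_zero, mul_one, zero_add, eval_natCast,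
      map_natCast, Nat.add_sub_cancel] at h1 h2
    push_cast at h2
    have h3 : w ^ m * (w - (m + 1)) = 0 := by
      rcases Nat.eq_zero_or_pos m with h0 | h0
      · subst h0; simp at h2
      · obtain ⟨k, rfl⟩ : ∃ k, m = k + 1 := ⟨m - 1, by omega⟩
        simp only [Nat.add_sub_cancel] at h2
        push_cast at h1 h2 ⊢
        linear_combination (w - 1) * h2 - ((k : ℂ) + 1) * h1
    rcases mul_eq_zero.1 h3 with h4 | h4
    · have h5 := eq_zero_of_pow_eq_zero h4
      rw [h5, zero_pow (by omega), zero_sub, zero_sub, neg_eq_zero] at h1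
      rcases mul_eq_zero.1 h1 with h6 | h6
      · exact hv h6
      · exact pow_ne_zero _ (by norm_num) h6
    · have h5 : w = m + 1 := by linear_combination h4
      rw [h5] at h1
      apply hv2
      simp at h1
      linear_combination - h1
  refine ⟨p.roots.toFinset, ?_, hv, ?_⟩
  · rw [Multiset.toFinset_card_of_nodup hnd, ← (IsAlgClosed.splits p).natDegree_eq_card_roots, hdeg]
  · change p = _
    conv_lhs => rw [(IsAlgClosed.splits p).eq_prod_roots_of_monic hmon]
    rw [Finset.prod, Multiset.toFinset_val, Multiset.dedup_eq_self.2 hnd]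

namespace Good
variable {m : ℕ} {v : ℂ} {s : Finset ℂ}

theorem root (h : Good m v s) {w : ℂ} (hw : w ∈ s) : w ^ (m + 1) = v * (w - 1) ^ m := by
  have := congrArg (eval w) h.2.2
  rw [eval_prod, Finset.prod_eq_zero hw (by simp)] at this
  simp at this
  linear_combination this

theorem prod_eq (h : Good m v s) : ∏ w ∈ s, w = v := by
  have := congrArg (eval 0) h.2.2
  rw [eval_prod] at this
  simp only [eval_sub, eval_pow, eval_X, eval_mul, eval_C, eval_one, zero_sub] at this
  have h2 : ∏ w ∈ s, (-w) = (-1) ^ (m + 1) * ∏ w ∈ s, w := by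
    rw [← h.1, ← Finset.prod_const, ← Finset.prod_mul_distrib]
    simp
  rw [h2] at this
  have h6 : ((-1 : ℂ) ^ m) * (-1) ^ m = 1 := by rw [← mul_pow]; simp
  rw [pow_succ (-1 : ℂ)] at this
  rw [zero_pow (by omega)] at this
  linear_combination (-1) ^ m * this + (v - ∏ w ∈ s, w) * h6

theorem prod_sub (h : Good m v s) (hm : 1 ≤ m) : ∏ w ∈ s, (w - 1) = (-1) ^ (m + 1) := by
  have := congrArg (eval 1) h.2.2
  rw [eval_prod] at this
  simp only [eval_sub, eval_pow, eval_X, eval_mul, eval_C, eval_one, sub_self] at this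
  rw [zero_pow (by omega)] at this
  have h2 : ∏ w ∈ s, (w - 1) = (-1) ^ (m + 1) * ∏ w ∈ s, (1 - w) := by
    rw [← h.1, ← Finset.prod_const, ← Finset.prod_mul_distrib]
    simp
  rw [h2, ← this]; simp

theorem sum_eq (h : Good m v s) : ∑ w ∈ s, w = v := by
  have := congrArg (fun p => coeff p m) h.2.2
  have h2 := prod_X_sub_C_coeff_card_pred s (fun w : ℂ => w) (by rw [h.1]; omega)
  rw [h.1, Nat.add_sub_cancel] at h2
  simp only [h2] at this
  rw [coeff_sub, coeff_X_pow, if_neg (by omega), coeff_C_mul] at this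
  have h3 : ((X - 1 : ℂ[X]) ^ m).coeff m = 1 := by
    rw [show (X - 1 : ℂ[X]) = X - C 1 by simp]
    have := ((monic_X_sub_C (1 : ℂ)).pow m).coeff_natDegree
    rwa [natDegree_pow, natDegree_X_sub_C, mul_one] at this
  rw [h3] at this
  linear_combination this

theorem ne_zero (h : Good m v s) {w : ℂ} (hw : w ∈ s) : w ≠ 0 := by
  rintro rfl
  exact h.2.1 (by rw [← h.prod_eq]; exact Finset.prod_eq_zero hw rfl)

theorem ne_one (h : Good m v s) (hm : 1 ≤ m) {w : ℂ} (hw : w ∈ s) : w ≠ 1 := by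
  rintro rfl
  have := h.root hw
  rw [sub_self, zero_pow (by omega)] at this
  simp at this

theorem prod_erase_ne (s : Finset ℂ) {w : ℂ} : ∏ w' ∈ s.erase w, (w - w') ≠ 0 := by
  rw [Finset.prod_ne_zero_iff]
  intro w' hw'
  have := Finset.ne_of_mem_erase hw'
  exact sub_ne_zero.2 this.symm

/-- Moments of the Lagrange functional. -/
noncomputable def mom (s : Finset ℂ) (e : ℕ) : ℂ :=
  ∑ w ∈ s, (∏ w' ∈ s.erase w, (w - w'))⁻¹ * w ^ e

theorem mom_low (h : Good m v s) (e : ℕ) (he : e ≤ m) : mom s e = if e = m then 1 else 0 := by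
  have := lagrange_sum s m h.1 (fun w => w) (fun w => (∏ w' ∈ s.erase w, (w - w'))⁻¹)
    (fun w hw => inv_mul_cancel₀ (prod_erase_ne s)) (X ^ e) (by simpa using he)
  simp only [eval_pow, eval_X, coeff_X_pow] at this
  rw [mom, this]
  simp [eq_comm]

theorem mom_rec (h : Good m v s) (k : ℕ) : mom s (m + 1 + k) =
    v * ∑ l ∈ Finset.range (m + 1), ((-1) ^ (m - l) * (m.choose l : ℂ)) * mom s (k + l) := by
  unfold mom
  simp only [Finset.mul_sum]
  rw [Finset.sum_comm]
  refine Finset.sum_congr rfl fun w hw => ?_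
  rw [pow_add, h.root hw, sub_eq_add_neg w 1, add_pow]
  rw [Finset.mul_sum, Finset.sum_mul, Finset.mul_sum]
  refine Finset.sum_congr rfl fun l _ => ?_
  rw [pow_add]; ring

theorem mom_poly (m : ℕ) : ∀ e, ∃ P : ℂ[X], (∀ i, e < i + m → P.coeff i = 0) ∧
    (m ≤ e → P.coeff (e - m) = 1) ∧ ∀ v s, Good m v s → mom s e = P.eval v := by
  intro e
  induction e using Nat.strong_induction_on with
  | _ e ih =>
    rcases lt_trichotomy e m with he | he | he
    · refine ⟨0, by simp, fun h => by omega, fun v s h => ?_⟩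
      rw [h.mom_low e he.le, if_neg (by omega)]; simp
    · subst he
      refine ⟨1, fun i hi => ?_, fun _ => by simp, fun v s h => ?_⟩
      · rw [coeff_one, if_neg (by omega)]
      · rw [h.mom_low e le_rfl]; simp
    · obtain ⟨k, rfl⟩ : ∃ k, e = m + 1 + k := ⟨e - m - 1, by omega⟩
      choose! P hP1 hP2 hP3 using ih
      refine ⟨X * ∑ l ∈ Finset.range (m + 1), C ((-1) ^ (m - l) * (m.choose l : ℂ)) * P (k + l),
        ?_, ?_, ?_⟩
      · intro i hi
        obtain ⟨i, rfl⟩ : ∃ i', i = i' + 1 := ⟨i - 1, by omega⟩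
        rw [coeff_X_mul, finsetSum_coeff]
        refine Finset.sum_eq_zero fun l hl => ?_
        rw [Finset.mem_range] at hl
        rw [coeff_C_mul, hP1 (k + l) (by omega) i (by omega), mul_zero]
      · intro _
        rw [show m + 1 + k - m = k + 1 by omega, coeff_X_mul, finsetSum_coeff,
          Finset.sum_range_succ, Finset.sum_eq_zero]
        · have := hP2 (k + m) (by omega) (by omega)
          rw [Nat.add_sub_cancel] at this
          rw [coeff_C_mul, this]; simp
        · intro l hl
          rw [Finset.mem_range] at hl
          rw [coeff_C_mul, hP1 (k + l) (by omega) k (by omega), mul_zero]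
      · intro v s h
        rw [h.mom_rec, eval_mul, eval_X, eval_finsetSum]
        congr 1
        refine Finset.sum_congr rfl fun l hl => ?_
        rw [Finset.mem_range] at hl
        rw [eval_mul, eval_C, hP3 (k + l) (by omega) v s h]

end Good

theorem poly_zero_of_good (m : ℕ) (q : ℂ[X])
    (h : ∀ v s, Good m v s → ∑ w ∈ s, (∏ w' ∈ s.erase w, (w - w'))⁻¹ * (w ^ m * q.eval w) = 0) :
    q = 0 := by
  choose P hP1 hP2 hP3 using Good.mom_poly m
  set R : ℂ[X] := ∑ i ∈ Finset.range (q.natDegree + 1), C (q.coeff i) * P (m + i) with hR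
  have hRv : ∀ v s, Good m v s → R.eval v = 0 := by
    intro v s hg
    rw [← h v s hg, hR, eval_finsetSum]
    simp only [eval_mul, eval_C, ← hP3 _ v s hg, Good.mom]
    simp only [Finset.mul_sum]
    rw [Finset.sum_comm]
    refine Finset.sum_congr rfl fun w _ => ?_
    rw [eval_eq_sum_range, Finset.mul_sum, Finset.mul_sum]
    refine Finset.sum_congr rfl fun i _ => ?_
    rw [pow_add]; ring
  have hR0 : R = 0 := by
    apply eq_zero_of_infinite_isRoot
    refine Set.Infinite.mono (s := ({0, ((m : ℂ) + 1) ^ (m + 1) / (m : ℂ) ^ m} : Set ℂ)ᶜ) ?_ ?_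
    · intro v hv
      simp only [Set.mem_compl_iff, Set.mem_insert_iff, Set.mem_singleton_iff, not_or] at hv
      obtain ⟨s, hs⟩ := good_exists m v hv.1 (by
        intro h
        apply hv.2
        rw [eq_div_iff, h]
        rcases Nat.eq_zero_or_pos m with h0 | h0
        · subst h0; simp
        · exact pow_ne_zero _ (by exact_mod_cast h0.ne'))
      exact hRv v s hs
    · exact (Set.toFinite _).infinite_compl
  have h1 := congrArg (fun p => coeff p q.natDegree) hR0
  simp only [hR, finsetSum_coeff, coeff_zero, coeff_C_mul] at h1
  rw [Finset.sum_range_succ, Finset.sum_eq_zero, zero_add] at h1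
  · have h2 := hP2 (m + q.natDegree) (by omega)
    rw [Nat.add_sub_cancel_left] at h2
    rw [h2, mul_one] at h1
    exact leadingCoeff_eq_zero.1 h1
  · intro i hi
    rw [Finset.mem_range] at hi
    rw [hP1 (m + i) _ (by omega), mul_zero]

end

section
open PowerSeries

variable {A B : Type*} [CommRing A] [Algebra ℚ A] [CommRing B] [Algebra ℚ B]

/-- `exp (a z)`. -/
noncomputable def ex (a : A) : A⟦X⟧ := rescale a (PowerSeries.exp A)

theorem coeff_ex (a : A) (n : ℕ) : coeff n (ex a) = a ^ n * algebraMap ℚ A (1 / n.factorial) := by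
  rw [ex, coeff_rescale, coeff_exp]

theorem ex_add (a b : A) : ex (a + b) = ex a * ex b :=
  (exp_mul_exp_eq_exp_add a b).symm

@[simp] theorem ex_zero : ex (0 : A) = 1 := by simp [ex]

@[simp] theorem constantCoeff_ex (a : A) : constantCoeff (ex a) = 1 := by
  rw [← coeff_zero_eq_constantCoeff_apply, coeff_ex]; simp

theorem ex_pow (a : A) (k : ℕ) : ex a ^ k = ex (k * a) := by
  induction k with
  | zero => simp
  | succ k ih => rw [pow_succ, ih, ← ex_add]; congr 1; push_cast; ring

theorem ex_prod {ι : Type*} (s : Finset ι) (f : ι → A) : ∏ i ∈ s, ex (f i) = ex (∑ i ∈ s, f i) := by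
  classical
  induction s using Finset.induction_on with
  | empty => simp
  | insert i s hi ih => rw [Finset.prod_insert hi, Finset.sum_insert hi, ih, ex_add]

theorem map_ex (φ : A →+* B) (a : A) : PowerSeries.map φ (ex a) = ex (φ a) := by
  ext n
  rw [coeff_map, coeff_ex, coeff_ex, map_mul, map_pow]
  congr 1
  exact congrFun (congrArg DFunLike.coe (Subsingleton.elim (φ.comp (algebraMap ℚ A)) (algebraMap ℚ B))) _

variable (m : ℕ)

/-- The parametrisation of `x`. -/
noncomputable def xs (w : A) : A⟦X⟧ := C w * ex (-(m * (w - 1)))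

variable (A) in
/-- The parametrisation of `t`. -/
noncomputable def tau : A⟦X⟧ := X * ex (-(m * (m + 1) : A))

/-- Auxiliary quotient. -/
noncomputable def qs (w : A) : A⟦X⟧ := PowerSeries.mk fun n =>
  if n = 0 then 0 else (-(m : A)) ^ n * (w - 1) ^ (n - 1) * algebraMap ℚ A (1 / n.factorial)

/-- The solution. -/
noncomputable def Gs (w : A) : A⟦X⟧ := C w * (ex (m + w) * (ex (-(m * (w - 1))) + qs m w))

theorem qs_mul (w : A) : C (w - 1) * qs m w = ex (-(m * (w - 1))) - 1 := by
  ext n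
  rw [coeff_C_mul, map_sub, coeff_ex, qs, coeff_mk, coeff_one]
  cases n with
  | zero => simp
  | succ n =>
    simp only [Nat.succ_ne_zero, if_false, Nat.add_sub_cancel, sub_zero]
    rw [← neg_mul, mul_pow, pow_succ (w - 1)]; ring

theorem Gs_mul (w : A) : C (w - 1) * Gs m w = C w * ex (m + w) * (xs m w - 1) := by
  have h := qs_mul m w
  rw [Gs, xs]
  rw [map_sub, map_one] at *
  linear_combination (C w * ex (m + w)) * h

theorem xs_one : xs m (1 : A) = 1 := by simp [xs]

theorem Gs_one : Gs m (1 : A) = ex (m + 1 : A) * (1 - C (m : A) * X) := by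
  have : qs m (1 : A) = - (C (m : A) * X) := by
    ext n
    rw [qs, coeff_mk, map_neg, coeff_C_mul, coeff_X]
    rcases n with _ | _ | n
    · simp
    · simp
    · simp
  rw [Gs, this]; simp; ring

theorem map_xs (φ : A →+* B) (w : A) : PowerSeries.map φ (xs m w) = xs m (φ w) := by
  simp [xs, map_ex]

theorem map_tau (φ : A →+* B) : PowerSeries.map φ (tau A m) = tau B m := by
  simp [tau, map_ex]

theorem map_Gs (φ : A →+* B) (w : A) : PowerSeries.map φ (Gs m w) = Gs m (φ w) := by
  have : PowerSeries.map φ (qs m w) = qs m (φ w) := by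
    ext n
    simp only [qs, coeff_map, coeff_mk]
    split_ifs
    · simp
    · simp only [map_mul, map_pow, map_neg, map_sub, map_one, map_natCast]
      congr 1
      exact congrFun (congrArg DFunLike.coe (Subsingleton.elim (φ.comp (algebraMap ℚ A)) (algebraMap ℚ B))) _
  simp [Gs, map_ex, this]

/-- Truncated generating functions. -/
noncomputable def fs (M k j : ℕ) (w : A) : A⟦X⟧ :=
  ∑ n ∈ Finset.range M, Polynomial.aeval (xs m w) (gp m k n j) * tau A m ^ n

/-- Truncated full generating function. -/
noncomputable def gs (M : ℕ) (w : A) : A⟦X⟧ :=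
  ∑ n ∈ Finset.range M, Polynomial.aeval (xs m w) (fp m n) * tau A m ^ n

theorem map_aeval' (φ : A →+* B) (p : Polynomial ℚ) (x : A⟦X⟧) :
    PowerSeries.map φ (Polynomial.aeval x p) = Polynomial.aeval (PowerSeries.map φ x) p := by
  simp only [Polynomial.aeval_def]
  rw [Polynomial.hom_eval₂]
  congr 1
  exact Subsingleton.elim _ _

theorem map_gs (φ : A →+* B) (M : ℕ) (w : A) :
    PowerSeries.map φ (gs m M w) = gs m M (φ w) := by
  simp [gs, map_aeval', map_xs, map_tau]

theorem gs_eq (M : ℕ) (w : A) : gs m M w = ∑ j ∈ Finset.range M,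
    C (algebraMap ℚ A (1 / (j.factorial : ℚ))) * fs m M 0 j w := by
  unfold gs fs
  simp only [Finset.mul_sum]
  rw [Finset.sum_comm]
  refine Finset.sum_congr rfl fun n hn => ?_
  rw [Finset.mem_range] at hn
  have : fp m n = ∑ j ∈ Finset.range M, Polynomial.C (1 / (j.factorial : ℚ)) * gp m 0 n j := by
    rw [fp_eq]
    apply Finset.sum_subset
    · intro j; simp; omega
    · intro j _ hj
      rw [gp_zero_of_lt _ _ _ _ (by simpa using hj), mul_zero]
  rw [this, map_sum, Finset.sum_mul]
  refine Finset.sum_congr rfl fun j _ => ?_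
  rw [map_mul, Polynomial.aeval_C, mul_assoc]
  congr 1
  exact congrFun (congrArg DFunLike.coe (Subsingleton.elim (algebraMap ℚ A⟦X⟧)
    ((C : A →+* A⟦X⟧).comp (algebraMap ℚ A)))) _

theorem tau_pow_dvd (M n : ℕ) (h : M ≤ n) : (X : A⟦X⟧) ^ M ∣ tau A m ^ n := by
  rw [tau, mul_pow]
  exact Dvd.dvd.mul_right (pow_dvd_pow _ h) _

/-- Truncated Cauchy product. -/
theorem trunc_cauchy (M : ℕ) (F H : ℕ → A⟦X⟧) :
    (X : A⟦X⟧) ^ M ∣ (∑ n ∈ Finset.range M, (∑ ab ∈ Finset.HasAntidiagonal.antidiagonal n,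
        F ab.1 * H ab.2) * tau A m ^ n) -
      (∑ n ∈ Finset.range M, F n * tau A m ^ n) * (∑ n ∈ Finset.range M, H n * tau A m ^ n) := by
  rw [Finset.sum_mul_sum, ← Finset.sum_product']
  have e : (∑ n ∈ Finset.range M, (∑ ab ∈ Finset.HasAntidiagonal.antidiagonal n,
        F ab.1 * H ab.2) * tau A m ^ n) =
      ∑ ab ∈ (Finset.range M ×ˢ Finset.range M).filter (fun ab => ab.1 + ab.2 < M),
        F ab.1 * tau A m ^ ab.1 * (H ab.2 * tau A m ^ ab.2) := by
    simp only [Finset.sum_mul]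
    rw [Finset.sum_sigma']
    refine Finset.sum_bij (fun z _ => z.2) ?_ ?_ ?_ ?_
    · rintro ⟨n, a, b⟩ h
      simp at h ⊢
      omega
    · rintro ⟨n, a, b⟩ h ⟨n', a', b'⟩ h' heq
      simp only [Finset.mem_sigma, Finset.HasAntidiagonal.mem_antidiagonal, Prod.mk.injEq] at h h' heq
      obtain ⟨rfl, rfl⟩ := heq
      obtain ⟨_, rfl⟩ := h
      obtain ⟨_, rfl⟩ := h'
      rfl
    · rintro ⟨a, b⟩ h
      simp only [Finset.mem_filter, Finset.mem_product, Finset.mem_range] at h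
      refine ⟨⟨a + b, (a, b)⟩, ?_, rfl⟩
      simp; omega
    · rintro ⟨n, a, b⟩ h
      simp only [Finset.mem_sigma, Finset.HasAntidiagonal.mem_antidiagonal] at h
      obtain ⟨_, rfl⟩ := h
      simp only [pow_add]; ring
  rw [e, ← Finset.sum_filter_add_sum_filter_not (Finset.range M ×ˢ Finset.range M)
    (fun ab => ab.1 + ab.2 < M), sub_add_cancel_left, dvd_neg]
  refine Finset.dvd_sum fun ab hab => ?_
  have := (Finset.mem_filter.1 hab).2
  rw [show F ab.1 * tau A m ^ ab.1 * (H ab.2 * tau A m ^ ab.2) =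
    F ab.1 * H ab.2 * tau A m ^ (ab.1 + ab.2) by rw [pow_add]; ring]
  exact Dvd.dvd.mul_left (tau_pow_dvd m _ _ (by omega)) _

theorem aeval_C_eval (p : Polynomial ℚ) (x : A⟦X⟧) :
    Polynomial.aeval x (Polynomial.C (p.eval 1)) = Polynomial.aeval (1 : A⟦X⟧) p := by
  rw [Polynomial.aeval_C]
  have := Polynomial.aeval_algebraMap_apply A⟦X⟧ (1 : ℚ) p
  rw [map_one] at this
  rw [this]; rfl

theorem fs_rec (M k j : ℕ) (w : A) : (X : A⟦X⟧) ^ M ∣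
    (xs m w - 1) * fs m M (k + 1) j w - gs m M w * (fs m M k j w - fs m M k j 1) := by
  have h := trunc_cauchy m M (fun n => Polynomial.aeval (xs m w) (gp m k n j) -
    Polynomial.aeval (xs m 1) (gp m k n j)) (fun n => Polynomial.aeval (xs m w) (fp m n))
  convert h using 1
  congr 1
  · rw [fs, Finset.mul_sum]
    refine Finset.sum_congr rfl fun n _ => ?_
    have h2 := congrArg (Polynomial.aeval (xs m w)) (gp_rec m k n j)
    rw [map_mul, map_sub, Polynomial.aeval_X, map_one, map_sum] at h2
    rw [← mul_assoc, h2]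
    congr 1
    refine Finset.sum_congr rfl fun ab _ => ?_
    rw [map_mul, map_sub, aeval_C_eval, xs_one, mul_comm]
  · rw [mul_comm, gs]
    congr 1
    rw [fs, fs, ← Finset.sum_sub_distrib]
    exact Finset.sum_congr rfl fun n _ => by ring

theorem fs_zero (M : ℕ) (w : A) (hM : 1 ≤ M) : fs m M 0 0 w = xs m w := by
  obtain ⟨M, rfl⟩ : ∃ L, M = L + 1 := ⟨M - 1, by omega⟩
  rw [fs, Finset.sum_range_succ']
  simp [gp_succ_zero, gp_base]

theorem fs_succ (M j : ℕ) (w : A) : (X : A⟦X⟧) ^ M ∣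
    fs m M 0 (j + 1) w - tau A m * xs m w * fs m M m j w := by
  cases M with
  | zero => simp
  | succ M =>
    have e : fs m (M + 1) 0 (j + 1) w - tau A m * xs m w * fs m (M + 1) m j w =
        - (tau A m ^ (M + 1) * (xs m w * Polynomial.aeval (xs m w) (gp m m M j))) := by
      unfold fs
      rw [Finset.sum_range_succ', Finset.sum_range_succ, gp_zero_of_lt m 0 0 (j + 1) (by omega)]
      simp only [gp_succ_succ, map_mul, Polynomial.aeval_X, map_zero, zero_mul, add_zero]
      rw [mul_add, Finset.mul_sum, ← sub_sub, ← Finset.sum_sub_distrib, Finset.sum_eq_zero]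
      · ring
      · intro n _; ring
    rw [e, dvd_neg]
    exact Dvd.dvd.mul_right (tau_pow_dvd m _ _ le_rfl) _

theorem C_dvd_gs (M : ℕ) (w : A) : C w ∣ gs m M w := by
  refine Finset.dvd_sum fun n _ => Dvd.dvd.mul_right ?_ _
  have h : Polynomial.X ∣ fp m n := by
    refine Finset.dvd_sum fun x hx => Dvd.dvd.mul_left ?_ _
    obtain ⟨h1, h2, h3⟩ := mem_ival.1 hx
    have := contacts_pos m x.1 0 (by rw [h3.hrun_eq, h1])
    exact dvd_pow_self _ (by omega)
  obtain ⟨p, hp⟩ := h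
  rw [hp, map_mul, Polynomial.aeval_X, xs]
  exact Dvd.dvd.mul_right (Dvd.intro _ rfl) _

end

section
open PowerSeries

/-- The inverse of the catalytic multiplier. -/
noncomputable def ss (m : ℕ) (w : ℂ) : ℂ⟦X⟧ := C ((w - 1) / w) * ex (-(m + w))

/-- The catalytic multiplier. -/
noncomputable def As (m : ℕ) (w : ℂ) : ℂ⟦X⟧ := C (w / (w - 1)) * ex (m + w)

section
variable {m : ℕ} {w : ℂ}

theorem As_mul_ss (h0 : w ≠ 0) (h1 : w ≠ 1) : As m w * ss m w = 1 := by
  have h2 : w - 1 ≠ 0 := sub_ne_zero.2 h1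
  have e1 : (C (w / (w - 1)) : ℂ⟦X⟧) * C ((w - 1) / w) = 1 := by
    rw [← map_mul, show w / (w - 1) * ((w - 1) / w) = 1 by field_simp, map_one]
  have e2 : ex ((m : ℂ) + w) * ex (-(m + w)) = 1 := by rw [← ex_add]; simp
  rw [As, ss]
  linear_combination ex ((m : ℂ) + w) * ex (-(m + w)) * e1 + e2

theorem Gs_eq (h1 : w ≠ 1) : Gs m w = (xs m w - 1) * As m w := by
  have h2 : w - 1 ≠ 0 := sub_ne_zero.2 h1
  have h := Gs_mul m w
  have e1 : (C (w - 1) : ℂ⟦X⟧) ≠ 0 := by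
    rw [Ne, map_eq_zero_iff _ PowerSeries.C_injective]; exact h2
  apply mul_left_cancel₀ e1
  rw [h, As]
  have e2 : (C w : ℂ⟦X⟧) = C (w - 1) * C (w / (w - 1)) := by
    rw [← map_mul]; congr 1; field_simp
  rw [e2]; ring

theorem xs_eq {v : ℂ} (h0 : w ≠ 0) (hr : w ^ (m + 1) = v * (w - 1) ^ m) :
    xs m w = C v * ex (m * (m + 1) : ℂ) * ss m w ^ m := by
  rw [ss, mul_pow, ex_pow, ← map_pow, xs]
  have e1 : C v * ex (m * (m + 1) : ℂ) * (C (((w - 1) / w) ^ m) * ex (m * -(m + w))) =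
      (C v * C (((w - 1) / w) ^ m)) * (ex (m * (m + 1) : ℂ) * ex (m * -(m + w))) := by ring
  rw [e1, ← map_mul, ← ex_add]
  congr 2
  · rw [div_pow, ← mul_div_assoc, ← hr]; field_simp; ring
  · ring

theorem tau_xs_eq {v : ℂ} (h0 : w ≠ 0) (hr : w ^ (m + 1) = v * (w - 1) ^ m) :
    tau ℂ m * xs m w = X * C v * ss m w ^ m := by
  rw [xs_eq h0 hr, tau]
  have e2 : ex (-(m * (m + 1) : ℂ)) * ex (m * (m + 1) : ℂ) = 1 := by rw [← ex_add]; simp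
  linear_combination (X * C v * ss m w ^ m) * e2

theorem fs_chain (h0 : w ≠ 0) (h1 : w ≠ 1) {N M : ℕ} (hNM : N ≤ M)
    (ih : (X : ℂ⟦X⟧) ^ N ∣ gs m M w - Gs m w) (j k : ℕ) :
    (X : ℂ⟦X⟧) ^ N ∣ ss m w ^ k * fs m M k j w - (fs m M 0 j w -
      ∑ i ∈ Finset.range k, ss m w ^ i * fs m M i j (1 : ℂ)) := by
  have hstep : ∀ k, (X : ℂ⟦X⟧) ^ N ∣ ss m w * fs m M (k + 1) j w - (fs m M k j w - fs m M k j 1) := by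
    intro k
    have r := (pow_dvd_pow (X : ℂ⟦X⟧) hNM).trans (fs_rec m M k j w)
    have u : IsUnit (xs m w - 1) := by
      rw [PowerSeries.isUnit_iff_constantCoeff, map_sub, xs, map_mul]
      simp [sub_ne_zero.2 h1]
    have d : (X : ℂ⟦X⟧) ^ N ∣ (xs m w - 1) *
        (fs m M (k + 1) j w - As m w * (fs m M k j w - fs m M k j 1)) := by
      rw [Gs_eq h1] at ih
      have := dvd_add r (Dvd.dvd.mul_right ih (fs m M k j w - fs m M k j 1))
      convert this using 1
      ring
    have d2 := (u.dvd_mul_left).1 d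
    have d3 := Dvd.dvd.mul_left d2 (ss m w)
    convert d3 using 1
    linear_combination (fs m M k j w - fs m M k j 1) * As_mul_ss (m := m) h0 h1
  induction k with
  | zero => simp
  | succ k ihk =>
    have := dvd_add (Dvd.dvd.mul_left (hstep k) (ss m w ^ k)) ihk
    convert this using 1
    rw [Finset.sum_range_succ, pow_succ]
    ring
end

theorem step_at {m : ℕ} (hm : 1 ≤ m) {v : ℂ} {s : Finset ℂ} (hg : Good m v s) {N M : ℕ}
    (hNM : N + 1 ≤ M) (ih : ∀ w : ℂ, (X : ℂ⟦X⟧) ^ N ∣ gs m M w - Gs m w) :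
    ∑ w ∈ s, (∏ w' ∈ s.erase w, ((w - 1) / w - (w' - 1) / w'))⁻¹ *
      coeff N (gs m M w - Gs m w) = 0 := by
  set l : ℂ → ℂ⟦X⟧ := fun w => (∏ w' ∈ s.erase w, (ss m w - ss m w'))⁻¹ with hl
  have ccss : ∀ w, constantCoeff (ss m w) = (w - 1) / w := by intro w; simp [ss]
  have ccprod : ∀ w, constantCoeff (∏ w' ∈ s.erase w, (ss m w - ss m w')) =
      ∏ w' ∈ s.erase w, ((w - 1) / w - (w' - 1) / w') := by
    intro w; rw [map_prod]; simp [ccss]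
  have hl1 : ∀ w ∈ s, l w * ∏ w' ∈ s.erase w, (ss m w - ss m w') = 1 := by
    intro w hw
    apply PowerSeries.inv_mul_cancel
    rw [ccprod, Finset.prod_ne_zero_iff]
    intro w' hw'
    have h1 := hg.ne_zero hw
    have h2 := hg.ne_zero (Finset.mem_of_mem_erase hw')
    have h3 := Finset.ne_of_mem_erase hw'
    intro h
    field_simp at h
    apply h3
    linear_combination -h
  have ccl : ∀ w, constantCoeff (l w) =
      (∏ w' ∈ s.erase w, ((w - 1) / w - (w' - 1) / w'))⁻¹ := by
    intro w; simp only [hl]; rw [PowerSeries.constantCoeff_inv, ccprod]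
  -- powers of the multiplier
  have Lpow : ∀ k ≤ m, ∑ w ∈ s, l w * ss m w ^ k = if k = m then 1 else 0 := by
    intro k hk
    have := lagrange_sum s m hg.1 (ss m) l hl1 (Polynomial.X ^ k) (by simpa using hk)
    simp only [Polynomial.eval_pow, Polynomial.eval_X, Polynomial.coeff_X_pow] at this
    rw [this]; simp [eq_comm]
  have Lx : ∑ w ∈ s, l w * xs m w = C v * ex (m * (m + 1) : ℂ) := by
    have h1 := Lpow m le_rfl
    rw [if_pos rfl] at h1
    rw [← mul_one (C v * ex (m * (m + 1) : ℂ)), ← h1, Finset.mul_sum]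
    refine Finset.sum_congr rfl fun w hw => ?_
    rw [xs_eq (hg.ne_zero hw) (hg.root hw)]; ring
  have Lf : ∀ j, (X : ℂ⟦X⟧) ^ (N + 1) ∣ ∑ w ∈ s, l w * fs m M 0 j w -
      (X * C v) ^ j * (C v * ex (m * (m + 1) : ℂ)) := by
    intro j
    induction j with
    | zero =>
      simp only [fs_zero m M _ (by omega : 1 ≤ M)]
      rw [Lx]; simp
    | succ j ihj =>
      have h1 : ∀ w ∈ s, (X : ℂ⟦X⟧) ^ (N + 1) ∣ fs m M 0 (j + 1) w - X * C v * (fs m M 0 j w -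
          ∑ i ∈ Finset.range m, ss m w ^ i * fs m M i j (1 : ℂ)) := by
        intro w hw
        have a1 := (pow_dvd_pow (X : ℂ⟦X⟧) hNM).trans (fs_succ m M j w)
        rw [tau_xs_eq (hg.ne_zero hw) (hg.root hw)] at a1
        have a2 := fs_chain (hg.ne_zero hw) (hg.ne_one hm hw) (by omega : N ≤ M) (ih w) j m
        have a3 := Dvd.dvd.mul_right (mul_dvd_mul_left X a2) (C v)
        rw [← pow_succ'] at a3
        have a4 := dvd_add a1 a3
        convert a4 using 1
        ring
      have h2 : (X : ℂ⟦X⟧) ^ (N + 1) ∣ ∑ w ∈ s, l w * (fs m M 0 (j + 1) w - X * C v *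
          (fs m M 0 j w - ∑ i ∈ Finset.range m, ss m w ^ i * fs m M i j (1 : ℂ))) :=
        Finset.dvd_sum fun w hw => Dvd.dvd.mul_left (h1 w hw) _
      have h3 : ∑ w ∈ s, l w * ∑ i ∈ Finset.range m, ss m w ^ i * fs m M i j (1 : ℂ) = 0 := by
        simp only [Finset.mul_sum]
        rw [Finset.sum_comm]
        refine Finset.sum_eq_zero fun i hi => ?_
        rw [Finset.mem_range] at hi
        have := Lpow i hi.le
        rw [if_neg (by omega)] at this
        rw [← zero_mul (fs m M i j (1 : ℂ)), ← this, Finset.sum_mul]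
        exact Finset.sum_congr rfl fun w _ => by ring
      have h4 := dvd_add h2 (Dvd.dvd.mul_left ihj (X * C v))
      convert h4 using 1
      have h5 : ∑ w ∈ s, l w * (fs m M 0 (j + 1) w - X * C v *
          (fs m M 0 j w - ∑ i ∈ Finset.range m, ss m w ^ i * fs m M i j (1 : ℂ))) =
          ∑ w ∈ s, l w * fs m M 0 (j + 1) w - X * C v * ∑ w ∈ s, l w * fs m M 0 j w +
          X * C v * ∑ w ∈ s, l w * ∑ i ∈ Finset.range m, ss m w ^ i * fs m M i j (1 : ℂ) := by
        rw [Finset.mul_sum, Finset.mul_sum, ← Finset.sum_sub_distrib, ← Finset.sum_add_distrib]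
        exact Finset.sum_congr rfl fun w _ => by ring
      rw [h5, h3, pow_succ]
      ring
  have Lg : (X : ℂ⟦X⟧) ^ (N + 1) ∣ ∑ w ∈ s, l w * gs m M w -
      ex v * (C v * ex (m * (m + 1) : ℂ)) := by
    have h1 : ∑ w ∈ s, l w * gs m M w = ∑ j ∈ Finset.range M,
        C (algebraMap ℚ ℂ (1 / (j.factorial : ℚ))) * ∑ w ∈ s, l w * fs m M 0 j w := by
      simp only [gs_eq, Finset.mul_sum]
      rw [Finset.sum_comm]
      exact Finset.sum_congr rfl fun j _ => Finset.sum_congr rfl fun w _ => by ring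
    have h2 : (X : ℂ⟦X⟧) ^ (N + 1) ∣ ∑ j ∈ Finset.range M,
        C (algebraMap ℚ ℂ (1 / (j.factorial : ℚ))) * (∑ w ∈ s, l w * fs m M 0 j w -
          (X * C v) ^ j * (C v * ex (m * (m + 1) : ℂ))) :=
      Finset.dvd_sum fun j _ => Dvd.dvd.mul_left (Lf j) _
    have h3 : (X : ℂ⟦X⟧) ^ (N + 1) ∣ (∑ j ∈ Finset.range M,
        C (algebraMap ℚ ℂ (1 / (j.factorial : ℚ))) * (X * C v) ^ j) - ex v := by
      rw [PowerSeries.X_pow_dvd_iff]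
      intro n hn
      rw [map_sub, map_sum, coeff_ex, Finset.sum_eq_single n]
      · rw [mul_pow, coeff_C_mul, ← map_pow, mul_comm (X ^ n), coeff_C_mul, coeff_X_pow]
        simp; ring
      · intro j _ hj
        rw [mul_pow, coeff_C_mul, ← map_pow, mul_comm (X ^ j), coeff_C_mul, coeff_X_pow,
          if_neg (by omega)]
        simp
      · intro h; exact absurd (Finset.mem_range.2 (by omega)) h
    have h4 := dvd_add h2 (Dvd.dvd.mul_right h3 (C v * ex (m * (m + 1) : ℂ)))
    convert h4 using 1
    simp only [mul_sub, Finset.sum_sub_distrib, ← h1]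
    rw [sub_mul, Finset.sum_mul]
    simp only [← mul_assoc]
    ring
  have LG : ∑ w ∈ s, l w * Gs m w = ex v * (C v * ex (m * (m + 1) : ℂ)) := by
    have h1 : ∀ w ∈ s, l w * Gs m w =
        C v * ex (m * (m + 1) : ℂ) * (l w * ss m w ^ (m - 1)) - l w * As m w := by
      intro w hw
      have a1 := As_mul_ss (m := m) (hg.ne_zero hw) (hg.ne_one hm hw)
      have a2 : ss m w ^ m = ss m w ^ (m - 1) * ss m w := by
        rw [← pow_succ, Nat.sub_add_cancel hm]
      rw [Gs_eq (hg.ne_one hm hw), xs_eq (hg.ne_zero hw) (hg.root hw), a2]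
      linear_combination (l w * C v * ex (m * (m + 1) : ℂ) * ss m w ^ (m - 1)) * a1
    rw [Finset.sum_congr rfl h1, Finset.sum_sub_distrib, ← Finset.mul_sum, Lpow (m - 1) (by omega),
      if_neg (by omega), lagrange_inv s m hg.1 (ss m) l (As m) hl1
        (fun w hw => As_mul_ss (hg.ne_zero hw) (hg.ne_one hm hw))]
    have h2 : ∏ w ∈ s, As m w = C (v / (-1) ^ (m + 1)) * ex (m * (m + 1) + v) := by
      simp only [As]
      rw [Finset.prod_mul_distrib, ← map_prod, Finset.prod_div_distrib, hg.prod_eq, hg.prod_sub hm,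
        ex_prod, Finset.sum_add_distrib, hg.sum_eq, Finset.sum_const, hg.1]
      congr 2
      rw [nsmul_eq_mul]; push_cast; ring
    rw [h2, ex_add]
    have h3 : (C (v / (-1) ^ (m + 1)) : ℂ⟦X⟧) = (-1) ^ (m + 1) * C v := by
      have : v / (-1) ^ (m + 1) = (-1) ^ (m + 1) * v := by
        rw [div_eq_iff (pow_ne_zero _ (by norm_num))]
        have : ((-1 : ℂ) ^ (m + 1)) * (-1) ^ (m + 1) = 1 := by rw [← mul_pow]; simp
        linear_combination -v * this
      rw [this, map_mul, map_pow, map_neg, map_one]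
    rw [h3, pow_succ]
    have h6 : ((-1 : ℂ⟦X⟧) ^ m) * (-1) ^ m = 1 := by rw [← mul_pow]; simp
    generalize ex ((m : ℂ) * (m + 1)) = E
    generalize ex v = F
    linear_combination (C v * F * E) * h6
  rw [← LG, ← Finset.sum_sub_distrib] at Lg
  have h1 := (PowerSeries.X_pow_dvd_iff.1 Lg) N (by omega)
  rw [map_sum] at h1
  rw [← h1]
  refine Finset.sum_congr rfl fun w _ => ?_
  rw [← mul_sub]
  obtain ⟨d, hd⟩ := ih w
  rw [hd, ← ccl, mul_left_comm, coeff_X_pow_mul', coeff_X_pow_mul', if_pos le_rfl, if_pos le_rfl,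
    Nat.sub_self]
  simp

/-- The functional equation is solved. -/
theorem solve_poly {m : ℕ} (hm : 1 ≤ m) (M : ℕ) : ∀ N ≤ M,
    (X : (Polynomial ℂ)⟦X⟧) ^ N ∣ gs m M (Polynomial.X : Polynomial ℂ) - Gs m Polynomial.X := by
  intro N
  induction N with
  | zero => simp
  | succ N ihN =>
    intro hNM
    have ih := ihN (by omega)
    have ev : ∀ w : ℂ, PowerSeries.map (Polynomial.evalRingHom w)
        (gs m M (Polynomial.X : Polynomial ℂ) - Gs m Polynomial.X) = gs m M w - Gs m w := by
      intro w
      rw [map_sub, map_gs, map_Gs]; simp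
    have ihw : ∀ w : ℂ, (X : ℂ⟦X⟧) ^ N ∣ gs m M w - Gs m w := by
      intro w
      have := map_dvd (PowerSeries.map (Polynomial.evalRingHom w)) ih
      rwa [ev, map_pow, PowerSeries.map_X] at this
    rw [PowerSeries.X_pow_dvd_iff]
    intro n hn
    rcases Nat.lt_succ_iff_lt_or_eq.1 hn with h | h
    · exact PowerSeries.X_pow_dvd_iff.1 ih n h
    subst h
    have hW : C (Polynomial.X : Polynomial ℂ) ∣
        gs m M (Polynomial.X : Polynomial ℂ) - Gs m Polynomial.X :=
      dvd_sub (C_dvd_gs m M _) (Dvd.intro _ rfl)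
    obtain ⟨D, hD⟩ := hW
    have hco : coeff n (gs m M (Polynomial.X : Polynomial ℂ) - Gs m Polynomial.X) =
        Polynomial.X * coeff n D := by rw [hD, coeff_C_mul]
    rw [hco]
    suffices coeff n D = 0 by rw [this, mul_zero]
    apply poly_zero_of_good m
    intro v s hg
    have st := step_at hm hg hNM ihw
    have h1 : ∀ w, coeff n (gs m M w - Gs m w) = w * (coeff n D).eval w := by
      intro w
      rw [← ev w, coeff_map, hco]; simp
    have h2 : v * ∑ w ∈ s, (∏ w' ∈ s.erase w, (w - w'))⁻¹ * (w ^ m * (coeff n D).eval w) = 0 := by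
      rw [← st, Finset.mul_sum]
      refine Finset.sum_congr rfl fun w hw => ?_
      rw [h1]
      have h0 := hg.ne_zero hw
      have h3 : ∏ w' ∈ s.erase w, ((w - 1) / w - (w' - 1) / w') =
          (∏ w' ∈ s.erase w, (w - w')) / (w ^ m * ∏ w' ∈ s.erase w, w') := by
        have : (s.erase w).card = m := by rw [Finset.card_erase_of_mem hw, hg.1]; simp
        rw [← this, ← Finset.prod_const, ← Finset.prod_mul_distrib, ← Finset.prod_div_distrib]
        refine Finset.prod_congr rfl fun w' hw' => ?_
        have h4 := hg.ne_zero (Finset.mem_of_mem_erase hw')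
        field_simp
        ring
      have h5 : w * ∏ w' ∈ s.erase w, w' = v := by
        rw [Finset.mul_prod_erase s (fun w => w) hw, hg.prod_eq]
      rw [h3, inv_div, ← h5]
      ring
    exact (mul_eq_zero.1 h2).resolve_left hg.2.1

theorem solve_one {m : ℕ} (hm : 1 ≤ m) (M : ℕ) : (X : ℂ⟦X⟧) ^ M ∣
    (∑ n ∈ Finset.range M, C (algebraMap ℚ ℂ ((fp m n).eval 1)) * tau ℂ m ^ n) -
      ex (m + 1 : ℂ) * (1 - C (m : ℂ) * X) := by
  have h := map_dvd (PowerSeries.map (Polynomial.evalRingHom (1 : ℂ))) (solve_poly hm M M le_rfl)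
  rw [map_sub, map_gs, map_Gs, map_pow, PowerSeries.map_X] at h
  simp only [Polynomial.coe_evalRingHom, Polynomial.eval_X] at h
  rw [Gs_one, gs] at h
  convert h using 3 with n _
  rw [xs_one]
  have := Polynomial.aeval_algebraMap_apply ℂ⟦X⟧ (1 : ℚ) (fp m n)
  rw [map_one] at this
  rw [this, ← Polynomial.coe_aeval_eq_eval]
  congr 1
  exact congrFun (congrArg DFunLike.coe (Subsingleton.elim
    ((C : ℂ →+* ℂ⟦X⟧).comp (algebraMap ℚ ℂ)) (algebraMap ℚ ℂ⟦X⟧))) _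

end

section
open PowerSeries

/-- Vanishing of high finite differences. -/
theorem fd_zero (m l : ℕ) (hl : 2 ≤ l) :
    ∑ n ∈ Finset.range (l + 1), (l.choose n : ℂ) * (-1) ^ (l - n) * ((m : ℂ) * n + 1) ^ (l - 2) = 0 := by
  have hd : ((Polynomial.C (m : ℂ) * Polynomial.X + 1) ^ (l - 2)).natDegree < l := by
    refine lt_of_le_of_lt Polynomial.natDegree_pow_le ?_
    have : (Polynomial.C (m : ℂ) * Polynomial.X + 1).natDegree ≤ 1 := by compute_degree
    calc _ ≤ (l - 2) * 1 := Nat.mul_le_mul_left _ this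
      _ < l := by omega
  have h := congrFun (Polynomial.fwdDiff_iter_eq_zero_of_degree_lt hd) 0
  rw [fwdDiff_iter_eq_sum_shift] at h
  rw [Pi.zero_apply] at h
  rw [← h]
  refine Finset.sum_congr rfl fun n _ => ?_
  simp only [zsmul_eq_mul, nsmul_eq_mul, mul_one, zero_add, Polynomial.eval_pow, Polynomial.eval_add,
    Polynomial.eval_mul, Polynomial.eval_C, Polynomial.eval_X, Polynomial.eval_one]
  push_cast
  ring

theorem expand_term (y : ℂ) (hy : y ≠ 0) (N n : ℕ) (hn : n ≤ N) :
    (N.choose n : ℂ) * y ^ ((n : ℤ) - 2) * (1 - y) ^ (N - n) =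
      ∑ l ∈ Finset.range (N + 1), (N.choose l : ℂ) *
        ((l.choose n : ℂ) * (-1) ^ (l - n) * y ^ ((l : ℤ) - 2)) := by
  obtain ⟨k, rfl⟩ := Nat.exists_eq_add_of_le hn
  rw [show n + k + 1 = n + (k + 1) by ring, Finset.sum_range_add]
  rw [Finset.sum_eq_zero, zero_add]
  · rw [Nat.add_sub_cancel_left, show (1 - y) = -y + 1 by ring, add_pow, Finset.mul_sum]
    refine Finset.sum_congr rfl fun i hi => ?_
    have hi' : i ≤ k := Nat.lt_succ_iff.1 (Finset.mem_range.1 hi)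
    have h1 := Nat.choose_mul (n := n + k) (k := n + i) (s := n) (by omega)
    rw [Nat.add_sub_cancel_left, Nat.add_sub_cancel_left] at h1
    have h2 : ((n + k).choose (n + i) : ℂ) * (n + i).choose n = (n + k).choose n * k.choose i := by
      exact_mod_cast h1
    rw [Nat.add_sub_cancel_left, neg_pow, one_pow]
    have h3 : y ^ (((n + i : ℕ) : ℤ) - 2) = y ^ ((n : ℤ) - 2) * y ^ i := by
      rw [← zpow_natCast y i, ← zpow_add₀ hy]; congr 1; push_cast; ring
    rw [h3]
    linear_combination -((-1) ^ i * y ^ ((n : ℤ) - 2) * y ^ i) * h2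
  · intro l hl
    rw [Nat.choose_eq_zero_of_lt (Finset.mem_range.1 hl)]; simp

theorem abel_sum (m N : ℕ) :
    ∑ n ∈ Finset.range (N + 1), (N.choose n : ℂ) * ((m : ℂ) * n + 1) ^ ((n : ℤ) - 2) *
      (-((m : ℂ) * n)) ^ (N - n) = 1 - m * N / (m + 1) := by
  have hy : ∀ n : ℕ, ((m : ℂ) * n + 1) ≠ 0 := fun n => by exact_mod_cast Nat.succ_ne_zero (m * n)
  have h1 : ∀ n ∈ Finset.range (N + 1), (N.choose n : ℂ) * ((m : ℂ) * n + 1) ^ ((n : ℤ) - 2) *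
      (-((m : ℂ) * n)) ^ (N - n) = ∑ l ∈ Finset.range (N + 1), (N.choose l : ℂ) *
        ((l.choose n : ℂ) * (-1) ^ (l - n) * ((m : ℂ) * n + 1) ^ ((l : ℤ) - 2)) := by
    intro n hn
    rw [← expand_term _ (hy n) N n (Nat.lt_succ_iff.1 (Finset.mem_range.1 hn))]
    congr 2; ring
  rw [Finset.sum_congr rfl h1, Finset.sum_comm]
  have h2 : ∀ l ∈ Finset.range (N + 1), ∑ n ∈ Finset.range (N + 1), (N.choose l : ℂ) *
        ((l.choose n : ℂ) * (-1) ^ (l - n) * ((m : ℂ) * n + 1) ^ ((l : ℤ) - 2)) =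
      (N.choose l : ℂ) * ∑ n ∈ Finset.range (l + 1),
        ((l.choose n : ℂ) * (-1) ^ (l - n) * ((m : ℂ) * n + 1) ^ ((l : ℤ) - 2)) := by
    intro l hl
    rw [← Finset.mul_sum]
    congr 1
    symm
    apply Finset.sum_subset
    · intro x; simp only [Finset.mem_range] at *; omega
    · intro x _ hx
      rw [Nat.choose_eq_zero_of_lt (by simp only [Finset.mem_range] at hx; omega)]; simp
  rw [Finset.sum_congr rfl h2]
  have h3 : ∀ l : ℕ, 2 ≤ l → ∑ n ∈ Finset.range (l + 1),
        ((l.choose n : ℂ) * (-1) ^ (l - n) * ((m : ℂ) * n + 1) ^ ((l : ℤ) - 2)) = 0 := by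
    intro l hl
    rw [← fd_zero m l hl]
    refine Finset.sum_congr rfl fun n _ => ?_
    congr 1
    rw [← zpow_natCast]; congr 1; omega
  have hm1 : (m : ℂ) + 1 ≠ 0 := by exact_mod_cast Nat.succ_ne_zero m
  cases N with
  | zero => simp
  | succ N =>
    rw [Finset.sum_range_succ', Finset.sum_range_succ', Finset.sum_eq_zero]
    · simp [Finset.sum_range_succ]
      field_simp
      ring
    · intro l _
      rw [h3 _ (by omega), mul_zero]

/-- The expected coefficients. -/
noncomputable def bb (m n : ℕ) : ℚ :=
  (m + 1 : ℚ) ^ n * (m * n + 1 : ℚ) ^ ((n : ℤ) - 2) / n.factorial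

theorem bb_coeff (m M N : ℕ) (hN : N < M) :
    coeff N (∑ n ∈ Finset.range M, C (algebraMap ℚ ℂ (bb m n)) * tau ℂ m ^ n) =
      coeff N (ex (m + 1 : ℂ) * (1 - C (m : ℂ) * X)) := by
  have hm1 : (m : ℂ) + 1 ≠ 0 := by exact_mod_cast Nat.succ_ne_zero m
  rw [map_sum]
  have h0 : ∑ n ∈ Finset.range (N + 1), coeff N (C (algebraMap ℚ ℂ (bb m n)) * tau ℂ m ^ n) =
      ∑ n ∈ Finset.range M, coeff N (C (algebraMap ℚ ℂ (bb m n)) * tau ℂ m ^ n) := by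
    apply Finset.sum_subset
    · intro x; simp only [Finset.mem_range] at *; omega
    · intro x _ hx
      rw [coeff_C_mul, tau, mul_pow, coeff_X_pow_mul', if_neg, mul_zero]
      simp only [Finset.mem_range] at hx; omega
  rw [← h0]
  have h1 : ∀ n ∈ Finset.range (N + 1), coeff N (C (algebraMap ℚ ℂ (bb m n)) * tau ℂ m ^ n) =
      ((m : ℂ) + 1) ^ N / N.factorial * ((N.choose n : ℂ) * ((m : ℂ) * n + 1) ^ ((n : ℤ) - 2) *
      (-((m : ℂ) * n)) ^ (N - n)) := by
    intro n hn
    have hn' : n ≤ N := Nat.lt_succ_iff.1 (Finset.mem_range.1 hn)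
    obtain ⟨k, rfl⟩ := Nat.exists_eq_add_of_le hn'
    rw [coeff_C_mul, tau, mul_pow, coeff_X_pow_mul', if_pos hn', ex_pow, coeff_ex,
      Nat.add_sub_cancel_left, Nat.cast_add_choose, bb]
    have e1 : ((n.factorial : ℕ) : ℂ) ≠ 0 := by exact_mod_cast n.factorial_ne_zero
    have e2 : ((k.factorial : ℕ) : ℂ) ≠ 0 := by exact_mod_cast k.factorial_ne_zero
    have e3 : (((n + k).factorial : ℕ) : ℂ) ≠ 0 := by exact_mod_cast (n + k).factorial_ne_zero
    simp only [eq_ratCast]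
    push_cast
    rw [show (n : ℂ) * -(m * (m + 1)) = -(m * n) * (m + 1) by ring, mul_pow]
    generalize ((m : ℂ) * n + 1) ^ ((n : ℤ) - 2) = Z
    generalize (-((m : ℂ) * n)) ^ k = W
    field_simp
    ring
  rw [Finset.sum_congr rfl h1, ← Finset.mul_sum, abel_sum, mul_sub (ex _), mul_one, map_sub,
    mul_left_comm, coeff_C_mul]
  cases N with
  | zero => simp
  | succ N =>
    rw [coeff_succ_mul_X, coeff_ex, coeff_ex, Nat.factorial_succ]
    have e1 : ((N.factorial : ℕ) : ℂ) ≠ 0 := by exact_mod_cast N.factorial_ne_zero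
    have e2 : (N : ℂ) + 1 ≠ 0 := by exact_mod_cast Nat.succ_ne_zero N
    simp only [eq_ratCast]
    push_cast
    field_simp
    ring

theorem bb_dvd (m M : ℕ) : (X : ℂ⟦X⟧) ^ M ∣
    (∑ n ∈ Finset.range M, C (algebraMap ℚ ℂ (bb m n)) * tau ℂ m ^ n) -
      ex (m + 1 : ℂ) * (1 - C (m : ℂ) * X) := by
  rw [X_pow_dvd_iff]
  intro N hN
  rw [map_sub, bb_coeff m M N hN, sub_self]

theorem triang (m : ℕ) (d : ℕ → ℂ)
    (h : ∀ M, (X : ℂ⟦X⟧) ^ M ∣ ∑ n ∈ Finset.range M, C (d n) * tau ℂ m ^ n) (n : ℕ) : d n = 0 := by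
  induction n using Nat.strong_induction_on with
  | _ n ih =>
    have h1 := X_pow_dvd_iff.1 (h (n + 1)) n (Nat.lt_succ_self n)
    rw [Finset.sum_range_succ, Finset.sum_eq_zero, zero_add, coeff_C_mul, tau, mul_pow,
      coeff_X_pow_mul', if_pos le_rfl, Nat.sub_self, ex_pow, coeff_ex] at h1
    · simpa using h1
    · intro i hi
      rw [ih i (Finset.mem_range.1 hi)]; simp

theorem fp_eval_one {m : ℕ} (hm : 1 ≤ m) (n : ℕ) : (fp m n).eval 1 = bb m n := by
  have h := triang m (fun n => algebraMap ℚ ℂ ((fp m n).eval 1) - algebraMap ℚ ℂ (bb m n)) (by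
    intro M
    have h1 := dvd_sub (solve_one hm M) (bb_dvd m M)
    rw [sub_sub_sub_cancel_right, ← Finset.sum_sub_distrib] at h1
    convert h1 using 2
    rw [map_sub, sub_mul]) n
  exact (algebraMap ℚ ℂ).injective (sub_eq_zero.1 h)

end

/-- **(F. Bergeron's conjecture; Bousquet-Mélou, Chapuy, Préville-Ratelle.)**
Fix `m ≥ 1` and `n ≥ 1`.  The number of labelled `m`-Tamari intervals of size `n`
equals `(m+1)^n (mn+1)^{n−2}`, an identity in `ℚ`. -/
theorem card_labelled_tamari_intervals (m n : ℕ) (hm : 1 ≤ m) (hn : 1 ≤ n) :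
    (Nat.card {x : (List Step × List Step) × (Fin n → ℕ) //
        IsLabelledTamariInterval m n x} : ℚ)
      = (m + 1 : ℚ) ^ n * (m * n + 1 : ℚ) ^ ((n : ℤ) - 2) := by
  have _ := hn
  rw [card_labelled_eq, fp_eval_one hm, bb]
  have : (n.factorial : ℚ) ≠ 0 := by exact_mod_cast n.factorial_ne_zero
  field_simp
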